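/- arXiv:1905.03660 — 10 statements merged into one kernel-verified Lean document; each statement's English description precedes it below -/
import Mathlib

section
/- Let N_x ≥ 1, N_v ≥ 0, and let κ, Δt, Δv, Δx > 0 and tol ≥ 0. Let v_j ∈ ℝ (j = 0,…,N_v) be velocity nodes. For n = 0,…,N_t let f^n : ZMod N_x × {0,…,N_v} → ℝ, and suppose for each n < N_t there are shifts s_j ∈ ℤ and weights θ_j ∈ ℝ (depending on j but not on i) and values g^n : ZMod N_x × {0,…,N_v} → ℝ such that, with the semi-Lagrangian interpolant f̃^n_{i,j} := θ_j·f^n_{i−s_j+1, j} + (1−θ_j)·f^n_{i−s_j, j} (indices taken in ZMod N_x), the update rule f^{n+1}_{i,j} = (κ·f̃^n_{i,j} + Δt·g^n_{i,j})/(κ + Δt) holds, and such that the discrete-Maxwellian tolerance condition |Σ_{j=0}^{N_v} (g^n_{i,j} − f̃^n_{i,j})·φ_ℓ(v_j)·Δv| ≤ tol holds for every i ∈ ZMod N_x and every ℓ ∈ {1,2,3}. Then for every ℓ ∈ {1,2,3}: |Σ_{i∈ZMod N_x} Σ_{j=0}^{N_v} (f^{N_t}_{i,j} − f^0_{i,j})·φ_ℓ(v_j)·Δv·Δx|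 ≤ (N_t·Δt/(κ + Δt))·(N_x·Δx)·tol. -/
open Finset

/-- The 1D collision invariants: `φ_1(v) = 1`, `φ_2(v) = v`, `φ_3(v) = v²/2`. -/
noncomputable def phi : Fin 3 → ℝ → ℝ := ![fun _ => 1, fun w => w, fun w => w ^ 2 / 2]

/-! Write `m f` for the total moment of `f` against a weight on the velocity nodes. Since the
interpolation shift and weight depend on the velocity node only, summing over the periodic grid
gives `m f̃ = m f`. The implicit Euler update is `f̃ + Δt / (κ + Δt) * (g - f̃)`, so each time step
changes `m` by exactly `Δt / (κ + Δt) * m (g - f̃)`, which the tolerance controls node by node.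
Summing over the time steps gives the estimate. -/

section Interpolation

variable {G J R : Type*} [AddGroupWithOne G] [CommRing R]

/-- The semi-Lagrangian interpolant `f̃` of grid values `f`: linear interpolation between the two
neighbouring nodes `i - s j` and `i - s j + 1` of the foot of the characteristic through `i` with
velocity index `j`. The periodic space grid is encoded as a group `G` with unit step `1`. -/
def semiLagrangian (s : J → G) (θ : J → R) (f : G → J → R) : G → J → R :=
  fun i j => θ j * f (i - s j + 1) j + (1 - θ j) * f (i - s j) j

theorem sum_semiLagrangian [Fintype G] (s : J → G) (θ : J → R) (f : G → J → R) (j : J) :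
    ∑ i, semiLagrangian s θ f i j = ∑ i, f i j := by
  have sum_left : ∑ i, f (i - s j) j = ∑ i, f i j :=
    (Equiv.subRight (s j)).sum_comp (f · j)
  have sum_right : ∑ i, f (i - s j + 1) j = ∑ i, f i j :=
    ((Equiv.subRight (s j)).trans (Equiv.addRight 1)).sum_comp (f · j)
  simp only [semiLagrangian, sum_add_distrib, ← mul_sum, sum_left, sum_right]
  ring

end Interpolation

section Moment

variable {I J R : Type*} [Fintype I] [Fintype J]

/-- The total moment `∑ i, ∑ j, f i j * w j` of grid values `f` against velocity weights `w`, as a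
linear functional of `f`. The velocity mesh size is meant to be part of `w`; the space mesh size is
left out. -/
def moment [CommSemiring R] (w : J → R) : (I → J → R) →ₗ[R] R where
  toFun f := ∑ i, f i ⬝ᵥ w
  map_add' f g := by simp only [Pi.add_apply, add_dotProduct, sum_add_distrib]
  map_smul' c f := by simp only [Pi.smul_apply, smul_dotProduct, smul_sum, RingHom.id_apply]

theorem moment_apply [CommSemiring R] (w : J → R) (f : I → J → R) :
    moment w f = ∑ i, f i ⬝ᵥ w :=
  rfl

theorem moment_congr [CommSemiring R] (w : J → R) {f g : I → J → R}
    (h : ∀ j, ∑ i, f i j = ∑ i, g i j) : moment w f = moment w g := by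
  simp only [moment_apply, dotProduct]
  rw [sum_comm, sum_comm (f := fun i j => g i j * w j)]
  simp only [← sum_mul, h]

theorem moment_semiLagrangian {G : Type*} [AddGroupWithOne G] [Fintype G] [CommRing R]
    (w : J → R) (s : J → G) (θ : J → R) (f : G → J → R) :
    moment w (semiLagrangian s θ f) = moment w f :=
  moment_congr w (sum_semiLagrangian s θ f)

theorem abs_moment_le [CommRing R] [LinearOrder R] [IsStrictOrderedRing R] {w : J → R}
    {f : I → J → R} {tol : R} (h : ∀ i, |f i ⬝ᵥ w| ≤ tol) :
    |moment w f| ≤ Fintype.card I * tol :=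
  calc |moment w f| ≤ ∑ i, |f i ⬝ᵥ w| := abs_sum_le_sum_abs _ _
    _ ≤ ∑ _i : I, tol := sum_le_sum fun i _ => h i
    _ = Fintype.card I * tol := by rw [sum_const, card_univ, nsmul_eq_mul]

end Moment

section ImplicitEuler

variable {I J K : Type*} [Field K]

/-- The implicit Euler update `(κ u + Δt g) / (κ + Δt)` of the BGK relaxation, starting from the
transported values `u = f̃` and relaxing towards `g`. -/
def relax (κ Δt : K) (u g : I → J → K) : I → J → K :=
  fun i j => (κ * u i j + Δt * g i j) / (κ + Δt)

theorem relax_eq_add_smul_sub {κ Δt : K} (h : κ + Δt ≠ 0) (u g : I → J → K) :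
    relax κ Δt u g = u + (Δt / (κ + Δt)) • (g - u) := by
  ext i j
  simp only [relax, Pi.add_apply, Pi.smul_apply, Pi.sub_apply, smul_eq_mul]
  field_simp
  ring

theorem moment_relax_semiLagrangian_sub {G : Type*} [AddGroupWithOne G] [Fintype G] [Fintype J]
    {κ Δt : K} (h : κ + Δt ≠ 0) (w : J → K) (s : J → G) (θ : J → K) (f g : G → J → K) :
    moment w (relax κ Δt (semiLagrangian s θ f) g) - moment w f =
      Δt / (κ + Δt) * moment w (g - semiLagrangian s θ f) := by
  rw [relax_eq_add_smul_sub h, map_add, map_smul, moment_semiLagrangian, smul_eq_mul,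
    add_sub_cancel_left]

end ImplicitEuler

theorem abs_sub_le_nat_mul_of_abs_succ_sub_le {u : ℕ → ℝ} {c : ℝ} {N : ℕ}
    (h : ∀ n < N, |u (n + 1) - u n| ≤ c) : |u N - u 0| ≤ N * c := by
  have telescope : dist (u 0) (u N) ≤ ∑ _n ∈ range N, c :=
    dist_le_range_sum_of_dist_le N fun {n} hn => by
      rw [dist_comm, Real.dist_eq]
      exact h n hn
  rwa [dist_comm, Real.dist_eq, sum_const, card_range, nsmul_eq_mul] at telescope

theorem stmt_0_general {G J : Type*} [AddGroupWithOne G] [Fintype G] [Fintype J] {N : ℕ}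
    {κ Δt Δx tol : ℝ} (hΔt : 0 ≤ Δt) (hκΔt : 0 < κ + Δt) (hΔx : 0 ≤ Δx) {w : J → ℝ}
    {f g : ℕ → G → J → ℝ} {s : ℕ → J → G} {θ : ℕ → J → ℝ}
    (hup : ∀ n < N, f (n + 1) = relax κ Δt (semiLagrangian (s n) (θ n) (f n)) (g n))
    (hdm : ∀ n < N, ∀ i, |(g n - semiLagrangian (s n) (θ n) (f n)) i ⬝ᵥ w| ≤ tol) :
    |moment w (f N - f 0) * Δx| ≤ (N * Δt / (κ + Δt)) * (Fintype.card G * Δx) * tol := by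
  have step : ∀ n < N, |moment w (f (n + 1)) - moment w (f n)| ≤
      Δt / (κ + Δt) * (Fintype.card G * tol) := fun n hn => by
    rw [hup n hn, moment_relax_semiLagrangian_sub hκΔt.ne', abs_mul,
      abs_of_nonneg (div_nonneg hΔt hκΔt.le)]
    gcongr
    exact abs_moment_le (hdm n hn)
  calc |moment w (f N - f 0) * Δx| = |moment w (f N) - moment w (f 0)| * Δx := by
        rw [map_sub, abs_mul, abs_of_nonneg hΔx]
    _ ≤ N * (Δt / (κ + Δt) * (Fintype.card G * tol)) * Δx := by
        gcongr
        exact abs_sub_le_nat_mul_of_abs_succ_sub_le (u := fun n => moment w (f n)) step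
    _ = (N * Δt / (κ + Δt)) * (Fintype.card G * Δx) * tol := by ring

theorem stmt_0 (Nx Nv Nt : ℕ) [NeZero Nx]
    (κ Δt Δv Δx tol : ℝ) (hκ : 0 < κ) (hΔt : 0 < Δt) (hΔv : 0 < Δv) (hΔx : 0 < Δx)
    (htol : 0 ≤ tol)
    (v : Fin (Nv + 1) → ℝ)
    (f : ℕ → ZMod Nx → Fin (Nv + 1) → ℝ)
    (s : ℕ → Fin (Nv + 1) → ℤ) (θ : ℕ → Fin (Nv + 1) → ℝ)
    (g : ℕ → ZMod Nx → Fin (Nv + 1) → ℝ)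
    (hup : ∀ n < Nt, ∀ (i : ZMod Nx) (j : Fin (Nv + 1)),
      f (n + 1) i j =
        (κ * (θ n j * f n (i - (s n j : ZMod Nx) + 1) j
            + (1 - θ n j) * f n (i - (s n j : ZMod Nx)) j)
          + Δt * g n i j) / (κ + Δt))
    (hdm : ∀ n < Nt, ∀ (i : ZMod Nx) (l : Fin 3),
      |∑ j : Fin (Nv + 1),
          (g n i j - (θ n j * f n (i - (s n j : ZMod Nx) + 1) j
              + (1 - θ n j) * f n (i - (s n j : ZMod Nx)) j)) * phi l (v j) * Δv| ≤ tol) :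
    ∀ l : Fin 3,
      |∑ i : ZMod Nx, ∑ j : Fin (Nv + 1), (f Nt i j - f 0 i j) * phi l (v j) * Δv * Δx|
        ≤ (Nt * Δt / (κ + Δt)) * ((Nx : ℝ) * Δx) * tol := by
  intro l
  have general := stmt_0_general (w := fun j => phi l (v j) * Δv) hΔt.le (add_pos hκ hΔt) hΔx.le
    (fun n hn => funext₂ (hup n hn)) fun n hn i => by
      simpa only [dotProduct, Pi.sub_apply, semiLagrangian, mul_assoc] using hdm n hn i l
  simpa only [moment_apply, dotProduct, Pi.sub_apply, sum_mul, mul_assoc, ZMod.card] using general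
end

section
/- Let N_x ≥ 1, N_v ≥ 0, κ, Δt, Δv, Δx > 0. Let v_j ∈ ℝ (j = 0,…,N_v). Let f^n : ZMod N_x × {0,…,N_v} → ℝ, let s_j ∈ ℤ and θ_j ∈ ℝ depend only on j, set f̃^n_{i,j} := θ_j·f^n_{i−s_j+1, j} + (1−θ_j)·f^n_{i−s_j, j} (indices in ZMod N_x), let g^n : ZMod N_x × {0,…,N_v} → ℝ be arbitrary, and define f^{n+1}_{i,j} = (κ·f̃^n_{i,j} + Δt·g^n_{i,j})/(κ + Δt). Then for each ℓ ∈ {1,2,3} the exact identity Σ_{i,j} (f^{n+1}_{i,j} − f^n_{i,j})·φ_ℓ(v_j)·Δv·Δx = (Δt/(κ + Δt))·Σ_{i,j} (g^n_{i,j} − f̃^n_{i,j})·φ_ℓ(v_j)·Δv·Δx holds, where sums run over i ∈ ZMod N_x and j = 0,…,N_v. -/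
open Finset

section MomentBalance

variable {K G ι : Type*} [AddGroup G]

/-- Linear interpolation, with weight `θ`, of a grid function `u` at the foot of the characteristic
through node `i`: the foot lies between the nodes `i - s` and `i - s + e`, where `e` is one mesh
step. The grid is an arbitrary group `G`, so that periodicity is built into the index arithmetic. -/
def shiftInterpolate [Ring K] (θ : K) (s e : G) (u : G → K) (i : G) : K :=
  θ * u (i - s + e) + (1 - θ) * u (i - s)

theorem sum_shiftInterpolate [Ring K] [Fintype G] (θ : K) (s e : G) (u : G → K) :
    ∑ i, shiftInterpolate θ s e u i = ∑ i, u i := by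
  have sum_foot : ∑ i, u (i - s) = ∑ i, u i := (Equiv.subRight s).sum_comp u
  have sum_foot_add : ∑ i, u (i - s + e) = ∑ i, u i :=
    ((Equiv.subRight s).trans (Equiv.addRight e)).sum_comp u
  simp only [shiftInterpolate, sum_add_distrib, ← mul_sum, sum_foot, sum_foot_add]
  rw [← add_mul, add_sub_cancel, one_mul]

theorem sum_shiftInterpolate_mul [Ring K] [Fintype G] [Fintype ι] (θ w : ι → K) (s : ι → G)
    (e : G) (f : G → ι → K) :
    ∑ i, ∑ j, shiftInterpolate (θ j) (s j) e (f · j) i * w j = ∑ i, ∑ j, f i j * w j := by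
  rw [sum_comm, sum_comm (f := fun i j => f i j * w j)]
  simp only [← sum_mul, sum_shiftInterpolate]

theorem weighted_average_sub_left [Field K] {κ τ : K} (h : κ + τ ≠ 0) (a b : K) :
    (κ * a + τ * b) / (κ + τ) - a = τ / (κ + τ) * (b - a) := by
  field_simp
  ring

/-- Interpolation preserves the sum over the grid for each `j`, so in every moment `f` may be
replaced by its interpolant, and the update is a weighted average of that interpolant and `g`. -/
theorem stmt_1_general [Field K] [Fintype G] [Fintype ι] {κ τ : K} (h : κ + τ ≠ 0)
    (θ w : ι → K) (s : ι → G) (e : G) (f fnext g : G → ι → K)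
    (hup : ∀ i j, fnext i j =
      (κ * shiftInterpolate (θ j) (s j) e (f · j) i + τ * g i j) / (κ + τ)) :
    ∑ i, ∑ j, (fnext i j - f i j) * w j =
      τ / (κ + τ) * ∑ i, ∑ j, (g i j - shiftInterpolate (θ j) (s j) e (f · j) i) * w j := by
  calc ∑ i, ∑ j, (fnext i j - f i j) * w j
      = ∑ i, ∑ j, (fnext i j - shiftInterpolate (θ j) (s j) e (f · j) i) * w j := by
        simp only [sub_mul, sum_sub_distrib, sum_shiftInterpolate_mul]
    _ = τ / (κ + τ) * ∑ i, ∑ j, (g i j - shiftInterpolate (θ j) (s j) e (f · j) i) * w j := by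
        simp only [hup, weighted_average_sub_left h, mul_sum, mul_assoc]

end MomentBalance

theorem stmt_1 (Nx Nv : ℕ) [NeZero Nx]
    (κ Δt Δv Δx : ℝ) (hκ : 0 < κ) (hΔt : 0 < Δt) (hΔv : 0 < Δv) (hΔx : 0 < Δx)
    (v : Fin (Nv + 1) → ℝ)
    (f fnext : ZMod Nx → Fin (Nv + 1) → ℝ)
    (s : Fin (Nv + 1) → ℤ) (θ : Fin (Nv + 1) → ℝ)
    (g : ZMod Nx → Fin (Nv + 1) → ℝ)
    (hup : ∀ (i : ZMod Nx) (j : Fin (Nv + 1)),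
      fnext i j =
        (κ * (θ j * f (i - (s j : ZMod Nx) + 1) j
            + (1 - θ j) * f (i - (s j : ZMod Nx)) j)
          + Δt * g i j) / (κ + Δt)) :
    ∀ l : Fin 3,
      ∑ i : ZMod Nx, ∑ j : Fin (Nv + 1), (fnext i j - f i j) * phi l (v j) * Δv * Δx
        = (Δt / (κ + Δt)) *
          ∑ i : ZMod Nx, ∑ j : Fin (Nv + 1),
            (g i j - (θ j * f (i - (s j : ZMod Nx) + 1) j
                + (1 - θ j) * f (i - (s j : ZMod Nx)) j)) * phi l (v j) * Δv * Δx := by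
  intro l
  simpa only [shiftInterpolate, mul_assoc] using
    stmt_1_general (add_pos hκ hΔt).ne' θ (fun j => phi l (v j) * Δv * Δx)
      (fun j => (s j : ZMod Nx)) 1 f fnext g hup
end

section
/- Let s ≥ 1, let b_1,…,b_s ∈ ℝ with b_s > 0, and let κ, Δt, Δv, Δx > 0, tol ≥ 0, N_x ≥ 1, N_v ≥ 0, v_j ∈ ℝ (j = 0,…,N_v). Let f^n, f*, f^{n+1} and, for k = 1,…,s−1, stage values f^{(k)} and M^{(k)}, and a final-stage value M^{(s)}, all be functions ZMod N_x × {0,…,N_v} → ℝ. Assume: (i) Σ_{i,j} f*_{i,j}·φ_ℓ(v_j)·Δv·Δx = Σ_{i,j} f^n_{i,j}·φ_ℓ(v_j)·Δv·Δx for ℓ = 1,2,3 (conservativity of the corrected convection step under periodicity); (ii) for every i and every ℓ ∈ {1,2,3}, |Σ_j (M^{(k)}_{i,j} − f^{(k)}_{i,j})·φ_ℓ(v_j)·Δv| ≤ tol for k = 1,…,s−1, and |Σ_j (M^{(s)}_{i,j} − f*_{i,j})·φ_ℓ(v_j)·Δv| ≤ tol; (iii) the update f^{n+1}_{i,j} =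 f*_{i,j} + (Δt/κ)·[Σ_{k=1}^{s−1} b_k·(M^{(k)}_{i,j} − f^{(k)}_{i,j}) + b_s·(M^{(s)}_{i,j} − f^{n+1}_{i,j})] holds for all i, j. Then for every ℓ ∈ {1,2,3}: |Σ_{i,j} (f^{n+1}_{i,j} − f^n_{i,j})·φ_ℓ(v_j)·Δv·Δx| ≤ (Σ_{k=1}^{s−1} |b_k| + |b_s|)·(Δt/(κ + b_s·Δt))·(N_x·Δx)·tol. -/
open Finset

/-!
Because `f^{n+1}` enters the right-hand side only linearly, the update can be solved for the
increment:
`f^{n+1} - f* = Δt / (κ + b_s Δt) • (∑ b_k (M^{(k)} - f^{(k)}) + b_s (M^{(s)} - f*))`.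
Every term on the right has a velocity moment of size at most `tol` times its weight, so the
increment in each cell has moment at most `(∑ |b_k| + |b_s|) Δt / (κ + b_s Δt) · tol`.
Conservativity of the convection step allows `f^n` to be replaced by `f*` in the total moment,
which is the sum of the cell moments times `Δx`.
-/

section ImplicitUpdate

theorem sub_eq_smul_of_implicit_update {𝕜 E : Type*} [Field 𝕜] [AddCommGroup E] [Module 𝕜 E]
    {κ τ β : 𝕜} {x a S M : E} (hκ : κ ≠ 0) (hden : κ + β * τ ≠ 0)
    (hx : x = a + (τ / κ) • (S + β • (M - x))) :
    x - a = (τ / (κ + β * τ)) • (S + β • (M - a)) := by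
  have hκx : κ • (x - a) = τ • (S + β • (M - x)) := by
    rw [sub_eq_of_eq_add' hx, smul_smul, mul_div_cancel₀ τ hκ]
  have hsolved : (κ + β * τ) • (x - a) = τ • (S + β • (M - a)) := by
    rw [add_smul, hκx]
    module
  rw [div_eq_inv_mul, mul_smul, ← hsolved, inv_smul_smul₀ hden]

variable {𝕜 E F K : Type*} [NormedField 𝕜] [SeminormedAddCommGroup F] [NormedSpace 𝕜 F]

theorem norm_sum_smul_le_sum_norm_mul {s : Finset K} (b : K → 𝕜) {m : K → F} {tol : ℝ}
    (hm : ∀ k ∈ s, ‖m k‖ ≤ tol) : ‖∑ k ∈ s, b k • m k‖ ≤ (∑ k ∈ s, ‖b k‖) * tol := by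
  rw [sum_mul]
  refine norm_sum_le_of_le s fun k hk => ?_
  rw [norm_smul]
  exact mul_le_mul_of_nonneg_left (hm k hk) (norm_nonneg _)

theorem norm_map_sub_le_of_implicit_update [AddCommGroup E] [Module 𝕜 E] (L : E →ₗ[𝕜] F)
    {s : Finset K} {b : K → 𝕜} {r : K → E} {κ τ β : 𝕜} {x a M : E} {tol : ℝ}
    (hκ : κ ≠ 0) (hden : κ + β * τ ≠ 0)
    (hx : x = a + (τ / κ) • (∑ k ∈ s, b k • r k + β • (M - x)))
    (hr : ∀ k ∈ s, ‖L (r k)‖ ≤ tol) (hM : ‖L (M - a)‖ ≤ tol) :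
    ‖L (x - a)‖ ≤ (∑ k ∈ s, ‖b k‖ + ‖β‖) * ‖τ / (κ + β * τ)‖ * tol := by
  have hL : L (x - a) = (τ / (κ + β * τ)) • (∑ k ∈ s, b k • L (r k) + β • L (M - a)) := by
    simp only [sub_eq_smul_of_implicit_update hκ hden hx, map_smul, map_add, map_sum]
  calc ‖L (x - a)‖
      = ‖τ / (κ + β * τ)‖ * ‖∑ k ∈ s, b k • L (r k) + β • L (M - a)‖ := by rw [hL, norm_smul]
    _ ≤ ‖τ / (κ + β * τ)‖ * ((∑ k ∈ s, ‖b k‖) * tol + ‖β‖ * tol) := by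
      gcongr
      refine norm_add_le_of_le (norm_sum_smul_le_sum_norm_mul b hr) ?_
      rw [norm_smul]
      gcongr
    _ = (∑ k ∈ s, ‖b k‖ + ‖β‖) * ‖τ / (κ + β * τ)‖ * tol := by ring

end ImplicitUpdate

section Moments

variable {X V : Type*} [Fintype V]

/-- The discrete velocity moment `g ↦ ∑ j, g j φ(v_j) Δv` of a distribution in one spatial cell, as
a linear functional. The argument `φ` holds the values `φ(v_j)` at the velocity nodes. -/
noncomputable def velocityMoment (φ : V → ℝ) (Δv : ℝ) : (V → ℝ) →ₗ[ℝ] ℝ :=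
  Fintype.linearCombination ℝ fun j => φ j * Δv

theorem velocityMoment_apply (φ : V → ℝ) (Δv : ℝ) (g : V → ℝ) :
    velocityMoment φ Δv g = ∑ j, g j * φ j * Δv := by
  simp only [velocityMoment, Fintype.linearCombination_apply, smul_eq_mul, mul_assoc]

variable [Fintype X]

theorem sum_moment_eq_sum_velocityMoment_mul (φ : V → ℝ) (Δv Δx : ℝ) (g : X → V → ℝ) :
    ∑ i, ∑ j, g i j * φ j * Δv * Δx = ∑ i, velocityMoment φ Δv (g i) * Δx := by
  simp only [velocityMoment_apply, sum_mul]

theorem sum_moment_sub_congr_right {φ : V → ℝ} {Δv Δx : ℝ} {g h : X → V → ℝ}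
    (hgh : ∑ i, ∑ j, g i j * φ j * Δv * Δx = ∑ i, ∑ j, h i j * φ j * Δv * Δx)
    (u : X → V → ℝ) :
    ∑ i, ∑ j, (u i j - h i j) * φ j * Δv * Δx = ∑ i, ∑ j, (u i j - g i j) * φ j * Δv * Δx := by
  simp only [sub_mul, sum_sub_distrib, hgh]

theorem abs_sum_moment_le_of_abs_velocityMoment_le {φ : V → ℝ} {Δv Δx C : ℝ} (hΔx : 0 ≤ Δx)
    {g : X → V → ℝ} (hg : ∀ i, |velocityMoment φ Δv (g i)| ≤ C) :
    |∑ i, ∑ j, g i j * φ j * Δv * Δx| ≤ C * (Fintype.card X * Δx) := by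
  rw [sum_moment_eq_sum_velocityMoment_mul, ← sum_mul, abs_mul, abs_of_nonneg hΔx, ← mul_assoc]
  gcongr
  calc |∑ i, velocityMoment φ Δv (g i)|
      ≤ ∑ i, |velocityMoment φ Δv (g i)| := abs_sum_le_sum_abs _ _
    _ ≤ Fintype.card X • C := sum_le_card_nsmul _ _ _ fun i _ => hg i
    _ = C * Fintype.card X := by rw [nsmul_eq_mul, mul_comm]

end Moments

theorem stmt_3_general {X V K : Type*} [Fintype X] [Fintype V] {s : Finset K} {b : K → ℝ}
    {κ Δt Δv Δx β tol : ℝ} (hκ : κ ≠ 0) (hΔt : 0 ≤ Δt) (hden : 0 < κ + β * Δt) (hΔx : 0 ≤ Δx)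
    {φ : V → ℝ} {f fstar fnext : X → V → ℝ} {fstage Mstage : K → X → V → ℝ} {Ms : X → V → ℝ}
    (hconv : ∑ i, ∑ j, fstar i j * φ j * Δv * Δx = ∑ i, ∑ j, f i j * φ j * Δv * Δx)
    (hstagetol : ∀ i, ∀ k ∈ s, |∑ j, (Mstage k i j - fstage k i j) * φ j * Δv| ≤ tol)
    (hlasttol : ∀ i, |∑ j, (Ms i j - fstar i j) * φ j * Δv| ≤ tol)
    (hup : ∀ i j, fnext i j = fstar i j + (Δt / κ) *
      ((∑ k ∈ s, b k * (Mstage k i j - fstage k i j)) + β * (Ms i j - fnext i j))) :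
    |∑ i, ∑ j, (fnext i j - f i j) * φ j * Δv * Δx|
      ≤ ((∑ k ∈ s, |b k|) + |β|) * (Δt / (κ + β * Δt)) * (Fintype.card X * Δx) * tol := by
  have hcell : ∀ i, |velocityMoment φ Δv (fnext i - fstar i)|
      ≤ (∑ k ∈ s, |b k| + |β|) * (Δt / (κ + β * Δt)) * tol := fun i => by
    have hupdate : fnext i = fstar i + (Δt / κ) •
        (∑ k ∈ s, b k • (Mstage k i - fstage k i) + β • (Ms i - fnext i)) := by
      ext j
      simpa only [Pi.add_apply, Pi.smul_apply, Pi.sub_apply, Finset.sum_apply, smul_eq_mul]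
        using hup i j
    have hbound := norm_map_sub_le_of_implicit_update (velocityMoment φ Δv) hκ hden.ne' hupdate
      (fun k hk => by simpa [velocityMoment_apply] using hstagetol i k hk)
      (by simpa [velocityMoment_apply] using hlasttol i)
    simpa only [Real.norm_eq_abs, abs_of_nonneg (div_nonneg hΔt hden.le)] using hbound
  rw [sum_moment_sub_congr_right hconv, mul_right_comm]
  exact abs_sum_moment_le_of_abs_velocityMoment_le hΔx hcell

theorem stmt_3 (s : ℕ) (hs : 1 ≤ s) (b : ℕ → ℝ) (hbs : 0 < b s)
    (κ Δt Δv Δx tol : ℝ) (hκ : 0 < κ) (hΔt : 0 < Δt) (hΔv : 0 < Δv) (hΔx : 0 < Δx)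
    (htol : 0 ≤ tol)
    (Nx Nv : ℕ) [NeZero Nx] (v : Fin (Nv + 1) → ℝ)
    (f fstar fnext : ZMod Nx → Fin (Nv + 1) → ℝ)
    (fstage Mstage : ℕ → ZMod Nx → Fin (Nv + 1) → ℝ)
    (Ms : ZMod Nx → Fin (Nv + 1) → ℝ)
    (hconv : ∀ l : Fin 3,
      ∑ i : ZMod Nx, ∑ j : Fin (Nv + 1), fstar i j * phi l (v j) * Δv * Δx
        = ∑ i : ZMod Nx, ∑ j : Fin (Nv + 1), f i j * phi l (v j) * Δv * Δx)
    (hstagetol : ∀ (i : ZMod Nx) (l : Fin 3), ∀ k ∈ Finset.Ico 1 s,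
      |∑ j : Fin (Nv + 1), (Mstage k i j - fstage k i j) * phi l (v j) * Δv| ≤ tol)
    (hlasttol : ∀ (i : ZMod Nx) (l : Fin 3),
      |∑ j : Fin (Nv + 1), (Ms i j - fstar i j) * phi l (v j) * Δv| ≤ tol)
    (hup : ∀ (i : ZMod Nx) (j : Fin (Nv + 1)),
      fnext i j = fstar i j + (Δt / κ) *
        ((∑ k ∈ Finset.Ico 1 s, b k * (Mstage k i j - fstage k i j))
          + b s * (Ms i j - fnext i j))) :
    ∀ l : Fin 3,
      |∑ i : ZMod Nx, ∑ j : Fin (Nv + 1), (fnext i j - f i j) * phi l (v j) * Δv * Δx|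
        ≤ ((∑ k ∈ Finset.Ico 1 s, |b k|) + |b s|) * (Δt / (κ + b s * Δt))
            * ((Nx : ℝ) * Δx) * tol := by
  intro l
  simpa only [ZMod.card] using stmt_3_general hκ.ne' hΔt.le (by positivity) hΔx.le (hconv l)
    (fun i => hstagetol i l) (fun i => hlasttol i l) hup
end

section
/- Let κ, Δt > 0, L > 0, tol ≥ 0, σ ≥ 1, and let b_1,…,b_σ ∈ ℝ with b_σ > 0. Set B := (Σ_{k=1}^{σ−1}|b_k| + |b_σ|)·(Δt/(κ + b_σ·Δt))·L·tol and D := ((2/3)·Δt/(κ + (2/3)·Δt))·L·tol. Let N_t ≥ 2 and let m^0, m^1, …, m^{N_t} ∈ ℝ satisfy: (i) |m^{k+1} − m^k| ≤ B for k = 0, 1 (startup steps); (ii) for every n with 2 ≤ n + 1 ≤ N_t there is δ^n ∈ ℝ with |δ^n| ≤ D and m^{n+1} = (4/3)·m^n − (1/3)·m^{n−1} + δ^n. Then |m^{N_t} − m^0| ≤ (3/2)·[(N_t − 2)·D + 2·B]. -/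
/-!
With `a = 1 / 3` the BDF2 recursion reads `m (n + 1) - m n = a * (m n - m (n - 1)) + δ`, so the
combination `m (n + 1) - a * m n` changes by at most `D` per step. After subtracting the reference
value `m 0` everywhere, this combination is small at the end of the startup phase and hence grows
at most linearly. Recovering `m` from it is a first-order recursion with contraction factor `a`,
which costs the factor `1 / (1 - a) = 3 / 2`.
-/

theorem le_div_one_sub_of_forall_le_mul_add {K : Type*} [Field K] [LinearOrder K]
    [IsStrictOrderedRing K] {u : ℕ → K} {r C : K} {n : ℕ} (hr₀ : 0 ≤ r) (hr₁ : r < 1)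
    (hzero : u 0 ≤ C / (1 - r)) (hstep : ∀ k < n, u (k + 1) ≤ r * u k + C) :
    u n ≤ C / (1 - r) := by
  have hfixed : r * (C / (1 - r)) + C = C / (1 - r) := by
    have : 1 - r ≠ 0 := (sub_pos.mpr hr₁).ne'
    field_simp
    ring
  induction n with
  | zero => exact hzero
  | succ n ih =>
    calc u (n + 1) ≤ r * u n + C := hstep n n.lt_succ_self
      _ ≤ r * (C / (1 - r)) + C := by
        gcongr
        exact ih fun k hk => hstep k (hk.trans n.lt_succ_self)
      _ = C / (1 - r) := hfixed

theorem norm_sub_apply_zero_le_nat_mul {V : Type*} [SeminormedAddCommGroup V] {w : ℕ → V} {D : ℝ}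
    {n : ℕ} (hstep : ∀ k < n, ‖w (k + 1) - w k‖ ≤ D) : ‖w n - w 0‖ ≤ n * D := by
  have hdist : dist (w 0) (w n) ≤ ∑ _k ∈ Finset.range n, D :=
    dist_le_range_sum_of_dist_le n fun {k} hk => by
      simpa only [dist_eq_norm'] using hstep k hk
  simpa only [dist_eq_norm', Finset.sum_const, Finset.card_range, nsmul_eq_mul] using hdist

section TwoStepRecursion

variable {𝕜 V : Type*} [NormedField 𝕜] [SeminormedAddCommGroup V] [NormedSpace 𝕜 V]
  {a : 𝕜} {C D : ℝ} {n : ℕ}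

theorem norm_succ_sub_smul_le_of_two_step {x : ℕ → V} (hinit : ‖x 1 - a • x 0‖ ≤ C)
    (hrec : ∀ k < n, ‖x (k + 2) - ((1 + a) • x (k + 1) - a • x k)‖ ≤ D) :
    ‖x (n + 1) - a • x n‖ ≤ n * D + C := by
  have hdrift : ‖(x (n + 1) - a • x n) - (x 1 - a • x 0)‖ ≤ n * D := by
    refine norm_sub_apply_zero_le_nat_mul (w := fun k => x (k + 1) - a • x k) fun k hk => ?_
    convert hrec k hk using 2
    module
  calc ‖x (n + 1) - a • x n‖
      ≤ ‖(x (n + 1) - a • x n) - (x 1 - a • x 0)‖ + ‖x 1 - a • x 0‖ := norm_le_norm_sub_add _ _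
    _ ≤ n * D + C := add_le_add hdrift hinit

theorem norm_le_of_two_step {x : ℕ → V} (ha : ‖a‖ < 1) (hzero : ‖x 0‖ ≤ C / (1 - ‖a‖))
    (hinit : ‖x 1 - a • x 0‖ ≤ C)
    (hrec : ∀ k < n, ‖x (k + 2) - ((1 + a) • x (k + 1) - a • x k)‖ ≤ D) :
    ‖x (n + 1)‖ ≤ (n * D + C) / (1 - ‖a‖) := by
  have hmono : ∀ k ≤ n, k * D ≤ n * D := by
    intro k hk
    rcases hk.eq_or_lt with rfl | hlt
    · exact le_rfl
    · have hD : 0 ≤ D := (norm_nonneg _).trans (hrec k hlt)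
      gcongr
  refine le_div_one_sub_of_forall_le_mul_add (u := fun k => ‖x k‖) (norm_nonneg a) ha ?_ ?_
  · have hC : C ≤ n * D + C := by simpa using hmono 0 n.zero_le
    exact hzero.trans (div_le_div_of_nonneg_right hC (sub_nonneg.mpr ha.le))
  · intro k hk
    rw [Nat.lt_succ_iff] at hk
    have hcomb : ‖x (k + 1) - a • x k‖ ≤ k * D + C :=
      norm_succ_sub_smul_le_of_two_step hinit fun j hj => hrec j (hj.trans_le hk)
    calc ‖x (k + 1)‖ = ‖a • x k + (x (k + 1) - a • x k)‖ := by rw [add_sub_cancel]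
      _ ≤ ‖a‖ * ‖x k‖ + ‖x (k + 1) - a • x k‖ := by
        simpa only [norm_smul] using norm_add_le (a • x k) (x (k + 1) - a • x k)
      _ ≤ ‖a‖ * ‖x k‖ + (n * D + C) := by linarith [hmono k hk]

theorem stmt_5_general {m : ℕ → V} {B : ℝ} (ha : ‖a‖ < 1)
    (hstart : ∀ k < 2, ‖m (k + 1) - m k‖ ≤ B)
    (hrec : ∀ k < n, ‖m (k + 3) - ((1 + a) • m (k + 2) - a • m (k + 1))‖ ≤ D) :
    ‖m (n + 2) - m 0‖ ≤ (n * D + (1 + ‖1 - a‖) * B) / (1 - ‖a‖) := by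
  have hfirst : ‖m 1 - m 0‖ ≤ B := hstart 0 two_pos
  have hsecond : ‖m 2 - m 1‖ ≤ B := hstart 1 one_lt_two
  have hB : 0 ≤ B := (norm_nonneg _).trans hfirst
  refine norm_le_of_two_step (x := fun k => m (k + 1) - m 0) ha ?_ ?_ fun k hk => ?_
  · calc ‖m 1 - m 0‖ ≤ B := hfirst
      _ ≤ (1 + ‖1 - a‖) * B := le_mul_of_one_le_left hB (by simp)
      _ ≤ (1 + ‖1 - a‖) * B / (1 - ‖a‖) :=
        le_div_self (by positivity) (sub_pos.mpr ha) (by simp)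
  · calc ‖(m 2 - m 0) - a • (m 1 - m 0)‖ = ‖(m 2 - m 1) + (1 - a) • (m 1 - m 0)‖ := by
          congr 1; module
      _ ≤ ‖m 2 - m 1‖ + ‖1 - a‖ * ‖m 1 - m 0‖ := by
        simpa only [norm_smul] using norm_add_le (m 2 - m 1) ((1 - a) • (m 1 - m 0))
      _ ≤ B + ‖1 - a‖ * B := by gcongr
      _ = (1 + ‖1 - a‖) * B := by ring
  · convert hrec k hk using 2
    module

end TwoStepRecursion

theorem stmt_5 (κ Δt L tol : ℝ) (hκ : 0 < κ) (hΔt : 0 < Δt) (hL : 0 < L) (htol : 0 ≤ tol)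
    (σ : ℕ) (hσ : 1 ≤ σ) (b : ℕ → ℝ) (hbσ : 0 < b σ)
    (B D : ℝ)
    (hB : B = ((∑ k ∈ Finset.Ico 1 σ, |b k|) + |b σ|) * (Δt / (κ + b σ * Δt)) * L * tol)
    (hD : D = ((2 / 3) * Δt / (κ + (2 / 3) * Δt)) * L * tol)
    (Nt : ℕ) (hNt : 2 ≤ Nt) (m : ℕ → ℝ)
    (hstart : ∀ k < 2, |m (k + 1) - m k| ≤ B)
    (hrec : ∀ n : ℕ, 2 ≤ n + 1 → n + 1 ≤ Nt →
      ∃ δ : ℝ, |δ| ≤ D ∧ m (n + 1) = (4 / 3) * m n - (1 / 3) * m (n - 1) + δ) :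
    |m Nt - m 0| ≤ (3 / 2) * (((Nt : ℝ) - 2) * D + 2 * B) := by
  obtain ⟨n, rfl⟩ := Nat.exists_eq_add_of_le' hNt
  have hB₀ : 0 ≤ B := (abs_nonneg _).trans (hstart 0 two_pos)
  have hdefect : ∀ k < n,
      ‖m (k + 3) - ((1 + 1 / 3 : ℝ) • m (k + 2) - (1 / 3 : ℝ) • m (k + 1))‖ ≤ D := by
    intro k hk
    obtain ⟨δ, hδ, hm⟩ := hrec (k + 2) (by lia) (by lia)
    rw [← Real.norm_eq_abs] at hδ
    convert hδ using 2
    rw [hm, Nat.add_succ_sub_one, smul_eq_mul, smul_eq_mul]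
    ring
  calc |m (n + 2) - m 0|
      ≤ (n * D + (1 + ‖(1 - 1 / 3 : ℝ)‖) * B) / (1 - ‖(1 / 3 : ℝ)‖) :=
        stmt_5_general (by norm_num) hstart hdefect
    _ = (3 / 2) * (n * D + 5 / 3 * B) := by
      rw [Real.norm_of_nonneg (by norm_num), Real.norm_of_nonneg (by norm_num)]
      ring
    _ ≤ (3 / 2) * (((n + 2 : ℕ) - 2 : ℝ) * D + 2 * B) := by
      push_cast
      linarith
end

section
/- Let κ, Δt > 0, L > 0, tol ≥ 0, σ ≥ 1, and let b_1,…,b_σ ∈ ℝ with b_σ > 0. Set B := (Σ_{k=1}^{σ−1}|b_k| + |b_σ|)·(Δt/(κ + b_σ·Δt))·L·tol and D := ((6/11)·Δt/(κ + (6/11)·Δt))·L·tol. Let N_t ≥ 3 and let m^0, m^1, …, m^{N_t} ∈ ℝ satisfy: (i) |m^{k+1} − m^k| ≤ B for k = 0, 1, 2 (startup steps); (ii) for every n with 3 ≤ n + 1 ≤ N_t there is δ^n ∈ ℝ with |δ^n| ≤ D and m^{n+1} = (18/11)·m^n − (9/11)·m^{n−1} + (2/11)·m^{n−2} + δ^n.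 Then |m^{N_t} − m^0| ≤ (146/11)·[(N_t − 3)·D + 3·B]. -/
/-!
The BDF3 characteristic polynomial factors as
`x³ - (18/11) x² + (9/11) x - 2/11 = (x - 1) (x² - (7/11) x + 2/11)`, so the increments
`d n = m (n + 1) - m n` satisfy `d (n + 1) = (7/11) d n - (2/11) d (n - 1) + δ`. The absolute values
of these coefficients add up to `9/11 < 1`. Summing the norms of the increments over all steps, the
right-hand side therefore reproduces at most `9/11` of the total variation on the left, which is
then bounded by `(1 - 9/11)⁻¹ = 11/2` times the contributions of the startup and of the defects.
This improves the paper's constant `146/11`.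
-/

open Finset

lemma sum_range_shift_le_sum_range_of_nonneg {a : ℕ → ℝ} (ha : ∀ n, 0 ≤ a n) {i s : ℕ}
    (his : i ≤ s) (N : ℕ) : ∑ n ∈ range N, a (n + i) ≤ ∑ n ∈ range (N + s), a n := by
  calc ∑ n ∈ range N, a (n + i)
      ≤ ∑ n ∈ range i, a n + ∑ n ∈ range N, a (n + i) :=
        le_add_of_nonneg_left (sum_nonneg fun n _ => ha n)
    _ = ∑ n ∈ range (N + i), a n := by
        simp only [add_comm _ i, sum_range_add]
    _ ≤ ∑ n ∈ range (N + s), a n :=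
        sum_le_sum_of_subset_of_nonneg (range_mono (by lia)) fun n _ _ => ha n

lemma one_sub_sum_mul_sum_range_le {s N : ℕ} {a : ℕ → ℝ} {c : Fin s → ℝ} {D : ℝ}
    (ha : ∀ n, 0 ≤ a n) (hc : ∀ i, 0 ≤ c i)
    (hrec : ∀ n < N, a (n + s) ≤ ∑ i, c i * a (n + i) + D) :
    (1 - ∑ i, c i) * ∑ n ∈ range (N + s), a n ≤ ∑ n ∈ range s, a n + N * D := by
  have tail_le : ∑ n ∈ range N, a (n + s)
      ≤ (∑ i, c i) * ∑ n ∈ range (N + s), a n + N * D := by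
    calc ∑ n ∈ range N, a (n + s)
        ≤ ∑ n ∈ range N, (∑ i, c i * a (n + i) + D) :=
          sum_le_sum fun n hn => hrec n (mem_range.mp hn)
      _ = ∑ i, c i * ∑ n ∈ range N, a (n + i) + N * D := by
          simp only [sum_add_distrib, sum_const, card_range, nsmul_eq_mul, mul_sum]
          rw [sum_comm]
      _ ≤ ∑ i, c i * ∑ n ∈ range (N + s), a n + N * D := by
          gcongr with i
          · exact hc i
          · exact sum_range_shift_le_sum_range_of_nonneg ha i.is_lt.le N
      _ = (∑ i, c i) * ∑ n ∈ range (N + s), a n + N * D := by rw [sum_mul]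
  have split : ∑ n ∈ range (N + s), a n = ∑ n ∈ range s, a n + ∑ n ∈ range N, a (n + s) := by
    simp only [add_comm _ s, sum_range_add]
  linarith

section Increments

variable {E : Type*} [SeminormedAddCommGroup E] [NormedSpace ℝ E]

theorem one_sub_sum_abs_mul_norm_sub_le {s N : ℕ} {m : ℕ → E} {c : Fin s → ℝ} {B D : ℝ}
    (hc : ∑ i, |c i| ≤ 1) (hstart : ∀ k < s, ‖m (k + 1) - m k‖ ≤ B)
    (hrec : ∀ n < N,
      ‖m (n + s + 1) - m (n + s) - ∑ i, c i • (m (n + i + 1) - m (n + i))‖ ≤ D) :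
    (1 - ∑ i, |c i|) * ‖m (N + s) - m 0‖ ≤ N * D + s * B := by
  have increment_le : ∀ n < N, ‖m (n + s + 1) - m (n + s)‖
      ≤ ∑ i, |c i| * ‖m (n + i + 1) - m (n + i)‖ + D := fun n hn => by
    calc ‖m (n + s + 1) - m (n + s)‖
        ≤ ‖∑ i, c i • (m (n + i + 1) - m (n + i))‖ + D :=
          (norm_le_norm_add_norm_sub' _ _).trans (by gcongr; exact hrec n hn)
      _ ≤ ∑ i, |c i| * ‖m (n + i + 1) - m (n + i)‖ + D := by
          gcongr
          exact norm_sum_le_of_le _ fun i _ => (norm_smul _ _).le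
  have start_le : ∑ k ∈ range s, ‖m (k + 1) - m k‖ ≤ s * B := by
    simpa using sum_le_card_nsmul (range s) _ B fun k hk => hstart k (mem_range.mp hk)
  calc (1 - ∑ i, |c i|) * ‖m (N + s) - m 0‖
      ≤ (1 - ∑ i, |c i|) * ∑ n ∈ range (N + s), ‖m (n + 1) - m n‖ := by
        rw [← sum_range_sub]
        exact mul_le_mul_of_nonneg_left (norm_sum_le _ _) (sub_nonneg.mpr hc)
    _ ≤ ∑ k ∈ range s, ‖m (k + 1) - m k‖ + N * D :=
        one_sub_sum_mul_sum_range_le (a := fun n => ‖m (n + 1) - m n‖)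
          (fun _ => norm_nonneg _) (fun _ => abs_nonneg _) increment_le
    _ ≤ N * D + s * B := by linarith

theorem stmt_6_general {N : ℕ} {m : ℕ → E} {B D : ℝ}
    (hstart : ∀ k < 3, ‖m (k + 1) - m k‖ ≤ B)
    (hrec : ∀ n < N, ‖m (n + 4) - ((18 / 11 : ℝ) • m (n + 3) - (9 / 11 : ℝ) • m (n + 2)
      + (2 / 11 : ℝ) • m (n + 1))‖ ≤ D) :
    ‖m (N + 3) - m 0‖ ≤ 11 / 2 * (N * D + 3 * B) := by
  -- The leading `0` widens the two-step increment recursion to the three startup increments.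
  let c : Fin 3 → ℝ := ![0, -(2 / 11), 7 / 11]
  have sum_abs_c : ∑ i, |c i| = 9 / 11 := by
    simp only [c, Fin.sum_univ_three, Matrix.cons_val]
    norm_num
  have increment_defect (n : ℕ) :
      m (n + 3 + 1) - m (n + 3) - ∑ i, c i • (m (n + i + 1) - m (n + i))
        = m (n + 4) - ((18 / 11 : ℝ) • m (n + 3) - (9 / 11 : ℝ) • m (n + 2)
          + (2 / 11 : ℝ) • m (n + 1)) := by
    simp only [c, Fin.sum_univ_three, Matrix.cons_val, Fin.val_zero, Fin.val_one, Fin.val_two,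
      add_assoc, Nat.reduceAdd]
    module
  have bound := one_sub_sum_abs_mul_norm_sub_le (c := c) (sum_abs_c.trans_le (by norm_num))
    hstart fun n hn => (increment_defect n).symm ▸ hrec n hn
  rw [sum_abs_c] at bound
  push_cast at bound
  linarith

end Increments

theorem stmt_6 (κ Δt L tol : ℝ) (hκ : 0 < κ) (hΔt : 0 < Δt) (hL : 0 < L) (htol : 0 ≤ tol)
    (σ : ℕ) (hσ : 1 ≤ σ) (b : ℕ → ℝ) (hbσ : 0 < b σ)
    (B D : ℝ)
    (hB : B = ((∑ k ∈ Finset.Ico 1 σ, |b k|) + |b σ|) * (Δt / (κ + b σ * Δt)) * L * tol)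
    (hD : D = ((6 / 11) * Δt / (κ + (6 / 11) * Δt)) * L * tol)
    (Nt : ℕ) (hNt : 3 ≤ Nt) (m : ℕ → ℝ)
    (hstart : ∀ k < 3, |m (k + 1) - m k| ≤ B)
    (hrec : ∀ n : ℕ, 3 ≤ n + 1 → n + 1 ≤ Nt →
      ∃ δ : ℝ, |δ| ≤ D ∧
        m (n + 1) = (18 / 11) * m n - (9 / 11) * m (n - 1) + (2 / 11) * m (n - 2) + δ) :
    |m Nt - m 0| ≤ (146 / 11) * (((Nt : ℝ) - 3) * D + 3 * B) := by
  obtain ⟨N, rfl⟩ := Nat.exists_eq_add_of_le' hNt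
  have defect_le : ∀ n < N, ‖m (n + 4) - ((18 / 11 : ℝ) • m (n + 3) - (9 / 11 : ℝ) • m (n + 2)
      + (2 / 11 : ℝ) • m (n + 1))‖ ≤ D := fun n hn => by
    obtain ⟨δ, hδ, hm⟩ := hrec (n + 3) (by lia) (by lia)
    simpa [hm] using hδ
  have bound : |m (N + 3) - m 0| ≤ 11 / 2 * (N * D + 3 * B) := stmt_6_general hstart defect_le
  push_cast
  linarith [abs_nonneg (m (N + 3) - m 0)]
end

section
/- Let ρ > 0, T > 0, U ∈ ℝ, and define the 1D Maxwellian M(v) := (ρ/√(2πT))·exp(−(v−U)²/(2T)). Let f : ℝ → ℝ be measurable with f(v) > 0 for almost every v, and assume f, v·f(v), v²·f(v), f·ln f, and M·ln f are all Lebesgue integrable on ℝ. Assume the moment matching conditions ∫_ℝ f(v) dv = ρ, ∫_ℝ v·f(v) dv = ρ·U, and ∫_ℝ v²·f(v) dv = ρ·(T + U²). Then ∫_ℝ (M(v) − f(v))·ln f(v) dv ≤ 0. -/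
open MeasureTheory Real

/-!
Since `log` is monotone, `(M - f) * log f ≤ (M - f) * log M` pointwise, whatever the positive
functions `M` and `f`. For a Maxwellian `M`, `log M` is an affine function of `(v - U) ^ 2`, so
the integral of the right-hand side only involves the difference of the masses and of the second
moments about `U` of `M` and `f`.
-/

open ProbabilityTheory
open scoped NNReal

section EntropyComparison

theorem sub_mul_log_le_sub_mul_log {x y : ℝ} (hx : 0 < x) (hy : 0 < y) :
    (y - x) * log x ≤ (y - x) * log y := by
  rcases le_total x y with hxy | hyx
  · exact mul_le_mul_of_nonneg_left (log_le_log hx hxy) (sub_nonneg.2 hxy)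
  · exact mul_le_mul_of_nonpos_left (log_le_log hy hyx) (sub_nonpos.2 hyx)

theorem integral_sub_mul_log_le_integral_sub_mul_log {α : Type*} [MeasurableSpace α]
    {μ : Measure α} {f g : α → ℝ} (hf : ∀ᵐ x ∂μ, 0 < f x) (hg : ∀ᵐ x ∂μ, 0 < g x)
    (hlogf : Integrable (fun x => (g x - f x) * log (f x)) μ)
    (hlogg : Integrable (fun x => (g x - f x) * log (g x)) μ) :
    ∫ x, (g x - f x) * log (f x) ∂μ ≤ ∫ x, (g x - f x) * log (g x) ∂μ := by
  refine integral_mono_ae hlogf hlogg ?_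
  filter_upwards [hf, hg] with x hfx hgx
  exact sub_mul_log_le_sub_mul_log hfx hgx

end EntropyComparison

section CentralMoment

variable {μ : Measure ℝ} {f : ℝ → ℝ}

theorem sub_sq_mul_eq (f : ℝ → ℝ) (c : ℝ) :
    (fun v => (v - c) ^ 2 * f v) =
      fun v => v ^ 2 * f v - 2 * c * (v * f v) + c ^ 2 * f v := by
  ext v
  ring

theorem integrable_sub_sq_mul (hf : Integrable f μ) (hvf : Integrable (fun v => v * f v) μ)
    (hv2f : Integrable (fun v => v ^ 2 * f v) μ) (c : ℝ) :
    Integrable (fun v => (v - c) ^ 2 * f v) μ := by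
  rw [sub_sq_mul_eq]
  exact (hv2f.sub (hvf.const_mul _)).add (hf.const_mul _)

theorem integral_sub_sq_mul (hf : Integrable f μ) (hvf : Integrable (fun v => v * f v) μ)
    (hv2f : Integrable (fun v => v ^ 2 * f v) μ) (c : ℝ) :
    ∫ v, (v - c) ^ 2 * f v ∂μ =
      ∫ v, v ^ 2 * f v ∂μ - 2 * c * ∫ v, v * f v ∂μ + c ^ 2 * ∫ v, f v ∂μ := by
  have hdiff : Integrable (fun v => v ^ 2 * f v - 2 * c * (v * f v)) μ :=
    hv2f.sub (hvf.const_mul _)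
  rw [sub_sq_mul_eq, integral_add hdiff (hf.const_mul _),
    integral_sub hv2f (hvf.const_mul _), integral_const_mul, integral_const_mul]

end CentralMoment

section Gaussian

variable {v : ℝ≥0}

theorem integral_sub_sq_mul_gaussianPDFReal (μ : ℝ) (hv : v ≠ 0) :
    ∫ x, (x - μ) ^ 2 * gaussianPDFReal μ v x = v := by
  calc ∫ x, (x - μ) ^ 2 * gaussianPDFReal μ v x
      = ∫ x, (x - μ) ^ 2 ∂gaussianReal μ v := by
        simp only [integral_gaussianReal_eq_integral_smul hv, smul_eq_mul, mul_comm]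
    _ = Var[fun x => x; gaussianReal μ v] := by
        rw [variance_eq_integral (by fun_prop), integral_id_gaussianReal]
    _ = v := variance_fun_id_gaussianReal

theorem integrable_sub_sq_mul_gaussianPDFReal (μ : ℝ) (hv : v ≠ 0) :
    Integrable (fun x => (x - μ) ^ 2 * gaussianPDFReal μ v x) := by
  apply Integrable.of_integral_ne_zero
  rw [integral_sub_sq_mul_gaussianPDFReal μ hv]
  exact NNReal.coe_ne_zero.2 hv

end Gaussian

/-- The one-dimensional Maxwellian with density `ρ`, bulk velocity `U` and temperature `T`: the
equilibrium distribution of the BGK model. The temperature is a real number, meaningful when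
`0 < T`. -/
noncomputable def maxwellian (ρ U T v : ℝ) : ℝ :=
  ρ / √(2 * π * T) * exp (-(v - U) ^ 2 / (2 * T))

namespace maxwellian

variable {ρ T : ℝ}

theorem eq_mul_gaussianPDFReal (ρ U : ℝ) (T : ℝ≥0) :
    maxwellian ρ U T = fun v => ρ * gaussianPDFReal U T v := by
  ext v
  rw [maxwellian, gaussianPDFReal_def]
  ring

theorem pos (hρ : 0 < ρ) (hT : 0 < T) (U v : ℝ) : 0 < maxwellian ρ U T v := by
  unfold maxwellian
  positivity

theorem integrable (ρ U : ℝ) (hT : 0 < T) : Integrable (maxwellian ρ U T) := by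
  lift T to ℝ≥0 using hT.le
  rw [eq_mul_gaussianPDFReal]
  exact (integrable_gaussianPDFReal U T).const_mul ρ

theorem integral_eq (ρ U : ℝ) (hT : 0 < T) : ∫ v, maxwellian ρ U T v = ρ := by
  lift T to ℝ≥0 using hT.le
  have hT₀ : T ≠ 0 := (NNReal.coe_pos.1 hT).ne'
  rw [eq_mul_gaussianPDFReal, integral_const_mul, integral_gaussianPDFReal_eq_one U hT₀, mul_one]

theorem integrable_sub_sq_mul (ρ U : ℝ) (hT : 0 < T) :
    Integrable (fun v => (v - U) ^ 2 * maxwellian ρ U T v) := by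
  lift T to ℝ≥0 using hT.le
  have hT₀ : T ≠ 0 := (NNReal.coe_pos.1 hT).ne'
  simp only [eq_mul_gaussianPDFReal, mul_left_comm _ ρ]
  exact (integrable_sub_sq_mul_gaussianPDFReal U hT₀).const_mul ρ

theorem integral_sub_sq_mul (ρ U : ℝ) (hT : 0 < T) :
    ∫ v, (v - U) ^ 2 * maxwellian ρ U T v = ρ * T := by
  lift T to ℝ≥0 using hT.le
  have hT₀ : T ≠ 0 := (NNReal.coe_pos.1 hT).ne'
  simp only [eq_mul_gaussianPDFReal, mul_left_comm _ ρ]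
  rw [integral_const_mul, integral_sub_sq_mul_gaussianPDFReal U hT₀]

theorem log_eq (hρ : 0 < ρ) (hT : 0 < T) (U v : ℝ) :
    log (maxwellian ρ U T v) = log (ρ / √(2 * π * T)) - (2 * T)⁻¹ * (v - U) ^ 2 := by
  have hpre : ρ / √(2 * π * T) ≠ 0 := by positivity
  rw [maxwellian, log_mul hpre (exp_ne_zero _), log_exp]
  ring

section MulLog

variable {U : ℝ} {μ : Measure ℝ} {h : ℝ → ℝ}

theorem mul_log_eq (hρ : 0 < ρ) (hT : 0 < T) (U : ℝ) (h : ℝ → ℝ) :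
    (fun v => h v * log (maxwellian ρ U T v)) =
      fun v => log (ρ / √(2 * π * T)) * h v - (2 * T)⁻¹ * ((v - U) ^ 2 * h v) := by
  ext v
  rw [log_eq hρ hT]
  ring

theorem integrable_mul_log (hρ : 0 < ρ) (hT : 0 < T) (hh : Integrable h μ)
    (hh2 : Integrable (fun v => (v - U) ^ 2 * h v) μ) :
    Integrable (fun v => h v * log (maxwellian ρ U T v)) μ := by
  rw [mul_log_eq hρ hT]
  exact (hh.const_mul _).sub (hh2.const_mul _)

theorem integral_mul_log (hρ : 0 < ρ) (hT : 0 < T) (hh : Integrable h μ)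
    (hh2 : Integrable (fun v => (v - U) ^ 2 * h v) μ) :
    ∫ v, h v * log (maxwellian ρ U T v) ∂μ =
      log (ρ / √(2 * π * T)) * ∫ v, h v ∂μ - (2 * T)⁻¹ * ∫ v, (v - U) ^ 2 * h v ∂μ := by
  rw [mul_log_eq hρ hT, integral_sub (hh.const_mul _) (hh2.const_mul _), integral_const_mul,
    integral_const_mul]

end MulLog

end maxwellian

theorem stmt_8_general {ρ T U : ℝ} (hρ : 0 < ρ) (hT : 0 < T) {f : ℝ → ℝ}
    (hf_pos : ∀ᵐ v, 0 < f v) (hf : Integrable f)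
    (hf2 : Integrable (fun v => (v - U) ^ 2 * f v))
    (hflogf : Integrable (fun v => f v * log (f v)))
    (hMlogf : Integrable (fun v => maxwellian ρ U T v * log (f v)))
    (hmass : ∫ v, f v = ρ) (hmoment : ∫ v, (v - U) ^ 2 * f v ≤ ρ * T) :
    ∫ v, (maxwellian ρ U T v - f v) * log (f v) ≤ 0 := by
  have hM := maxwellian.integrable ρ U hT
  have hM2 := maxwellian.integrable_sub_sq_mul ρ U hT
  have hdiff : Integrable (fun v => maxwellian ρ U T v - f v) := hM.sub hf
  have hdiff2 : Integrable (fun v => (v - U) ^ 2 * (maxwellian ρ U T v - f v)) := by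
    simp only [mul_sub]
    exact hM2.sub hf2
  have hdiff_mass : ∫ v, (maxwellian ρ U T v - f v) = 0 := by
    rw [integral_sub hM hf, maxwellian.integral_eq ρ U hT, hmass, sub_self]
  have hdiff_moment : 0 ≤ ∫ v, (v - U) ^ 2 * (maxwellian ρ U T v - f v) := by
    simp only [mul_sub]
    rwa [integral_sub hM2 hf2, maxwellian.integral_sub_sq_mul ρ U hT, sub_nonneg]
  have hdiff_logf : Integrable (fun v => (maxwellian ρ U T v - f v) * log (f v)) := by
    simp only [sub_mul]
    exact hMlogf.sub hflogf
  calc ∫ v, (maxwellian ρ U T v - f v) * log (f v)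
      ≤ ∫ v, (maxwellian ρ U T v - f v) * log (maxwellian ρ U T v) :=
        integral_sub_mul_log_le_integral_sub_mul_log hf_pos (.of_forall (maxwellian.pos hρ hT U))
          hdiff_logf (maxwellian.integrable_mul_log hρ hT hdiff hdiff2)
    _ = -((2 * T)⁻¹ * ∫ v, (v - U) ^ 2 * (maxwellian ρ U T v - f v)) := by
        rw [maxwellian.integral_mul_log hρ hT hdiff hdiff2, hdiff_mass, mul_zero, zero_sub]
    _ ≤ 0 := neg_nonpos.2 (by positivity)

theorem stmt_8 (ρ T U : ℝ) (hρ : 0 < ρ) (hT : 0 < T)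
    (M : ℝ → ℝ)
    (hM : ∀ v : ℝ, M v = ρ / Real.sqrt (2 * Real.pi * T) * Real.exp (-(v - U) ^ 2 / (2 * T)))
    (f : ℝ → ℝ) (hf_meas : Measurable f)
    (hf_pos : ∀ᵐ v : ℝ, 0 < f v)
    (hf_int : Integrable f)
    (hvf_int : Integrable (fun v : ℝ => v * f v))
    (hv2f_int : Integrable (fun v : ℝ => v ^ 2 * f v))
    (hflogf_int : Integrable (fun v : ℝ => f v * Real.log (f v)))
    (hMlogf_int : Integrable (fun v : ℝ => M v * Real.log (f v)))
    (hmass : (∫ v : ℝ, f v) = ρ)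
    (hmom : (∫ v : ℝ, v * f v) = ρ * U)
    (henergy : (∫ v : ℝ, v ^ 2 * f v) = ρ * (T + U ^ 2)) :
    (∫ v : ℝ, (M v - f v) * Real.log (f v)) ≤ 0 := by
  obtain rfl : M = maxwellian ρ U T := funext hM
  have hmoment : ∫ v, (v - U) ^ 2 * f v = ρ * T := by
    rw [integral_sub_sq_mul hf_int hvf_int hv2f_int, hmass, hmom, henergy]
    ring
  exact stmt_8_general hρ hT hf_pos hf_int (integrable_sub_sq_mul hf_int hvf_int hv2f_int U)
    hflogf_int hMlogf_int hmass hmoment.le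
end

section
/- Let c_1, c_2 ∈ ℝ with c_1 ≠ 1, c_1 ≠ 1/3, c_2 ≠ 1, and c_2 ≠ c_1. Define b_2 = (3c_1 − 1)/(6·(c_2 − c_1)·(c_2 − 1)), b_3 = (6c_1c_2 − 3c_1 − 3c_2 + 2)/(6·(c_2 − 1)·(c_1 − 1)), b_1 = 1 − b_2 − b_3, γ_2 = (6c_1²c_2 − 4c_1c_2 − c_1 + c_2)/(2·(3c_1 − 1)·(c_1 − 1)), and consider the 3-stage Butcher tableau with abscissae c = (c_1, c_2, 1), weights b = (b_1, b_2, b_3), and matrix A with rows (c_1, 0, 0), (c_2 − γ_2, γ_2, 0), (b_1, b_2, b_3). Then the third-order conditions hold: Σ_{i=1}^3 b_i = 1, Σ_{i=1}^3 b_i·c_i = 1/2, Σ_{i=1}^3 b_i·c_i² = 1/3, and Σ_{i,j=1}^3 b_i·a_{ij}·c_j = 1/6. -/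
open Finset

/-!
The weights `b` are those of the interpolatory quadrature rule on `[0, 1]` with nodes `c₁, c₂, 1`:
they are determined by the moments `1, 1/2, 1/3`, which gives the first three conditions. Given
`∑ bᵢ cᵢ² = 1/3`, the last condition says that the defects `δᵢ = ∑ⱼ aᵢⱼ cⱼ - cᵢ² / 2` satisfy
`∑ bᵢ δᵢ = 0`. Stiff accuracy forces `δ₃ = ∑ bⱼ cⱼ - 1/2 = 0`, and `γ₂` is the solution of the
remaining linear equation `b₁ δ₁ + b₂ δ₂ = 0`.
-/

section InterpolatoryWeight

variable {K : Type*} [Field K] (m₀ m₁ m₂ : K) {x y z : K}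

/-- The weight at the node `x` of the three-point quadrature rule with nodes `x, y, z` that
reproduces the moments `m₀, m₁, m₂` of `1, t, t²`. It is the value on the Lagrange basis polynomial
`(t - y) (t - z) / ((x - y) (x - z))` of the linear functional with these moments. -/
def interpolatoryWeight (m₀ m₁ m₂ x y z : K) : K :=
  (m₂ - (y + z) * m₁ + y * z * m₀) / ((x - y) * (x - z))

theorem sum_interpolatoryWeight_mul_quadratic (hxy : x ≠ y) (hxz : x ≠ z) (hyz : y ≠ z)
    (p₀ p₁ p₂ : K) :
    interpolatoryWeight m₀ m₁ m₂ x y z * (p₀ + p₁ * x + p₂ * x ^ 2) +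
      interpolatoryWeight m₀ m₁ m₂ y x z * (p₀ + p₁ * y + p₂ * y ^ 2) +
      interpolatoryWeight m₀ m₁ m₂ z x y * (p₀ + p₁ * z + p₂ * z ^ 2) =
    p₀ * m₀ + p₁ * m₁ + p₂ * m₂ := by
  have x_sub_y : x - y ≠ 0 := sub_ne_zero.mpr hxy
  have x_sub_z : x - z ≠ 0 := sub_ne_zero.mpr hxz
  have y_sub_z : y - z ≠ 0 := sub_ne_zero.mpr hyz
  rw [interpolatoryWeight, interpolatoryWeight, interpolatoryWeight, ← neg_sub x y, ← neg_sub x z,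
    ← neg_sub y z]
  field_simp
  ring

theorem sum_interpolatoryWeight (hxy : x ≠ y) (hxz : x ≠ z) (hyz : y ≠ z) :
    interpolatoryWeight m₀ m₁ m₂ x y z + interpolatoryWeight m₀ m₁ m₂ y x z +
      interpolatoryWeight m₀ m₁ m₂ z x y = m₀ := by
  simpa using sum_interpolatoryWeight_mul_quadratic m₀ m₁ m₂ hxy hxz hyz 1 0 0

theorem sum_interpolatoryWeight_mul (hxy : x ≠ y) (hxz : x ≠ z) (hyz : y ≠ z) :
    interpolatoryWeight m₀ m₁ m₂ x y z * x + interpolatoryWeight m₀ m₁ m₂ y x z * y +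
      interpolatoryWeight m₀ m₁ m₂ z x y * z = m₁ := by
  simpa using sum_interpolatoryWeight_mul_quadratic m₀ m₁ m₂ hxy hxz hyz 0 1 0

theorem sum_interpolatoryWeight_mul_sq (hxy : x ≠ y) (hxz : x ≠ z) (hyz : y ≠ z) :
    interpolatoryWeight m₀ m₁ m₂ x y z * x ^ 2 + interpolatoryWeight m₀ m₁ m₂ y x z * y ^ 2 +
      interpolatoryWeight m₀ m₁ m₂ z x y * z ^ 2 = m₂ := by
  simpa using sum_interpolatoryWeight_mul_quadratic m₀ m₁ m₂ hxy hxz hyz 0 0 1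

end InterpolatoryWeight

section StageDefect

variable {K ι : Type*} [Field K] [Fintype ι] {A : ι → ι → K} {b c : ι → K}

/-- The defect of stage `i` in the simplifying assumption `C(2)`, `∑ⱼ aᵢⱼ cⱼ = cᵢ² / 2`, of a
Runge–Kutta scheme. -/
def stageDefect (A : ι → ι → K) (c : ι → K) (i : ι) : K :=
  ∑ j, A i j * c j - c i ^ 2 / 2

theorem stageDefect_eq_zero_of_row_eq_weights {i : ι} (hA : A i = b) (hc : c i = 1)
    (hbc : ∑ j, b j * c j = 1 / 2) : stageDefect A c i = 0 := by
  rw [stageDefect, hA, hc, hbc, one_pow, sub_self]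

theorem sum_sum_weight_mul_eq (A : ι → ι → K) (b c : ι → K) :
    ∑ i, ∑ j, b i * A i j * c j = ∑ i, b i * stageDefect A c i + (∑ i, b i * c i ^ 2) / 2 := by
  simp only [stageDefect, mul_sub, sum_sub_distrib, mul_sum, sum_div, mul_assoc, mul_div_assoc,
    sub_add_cancel]

theorem sum_sum_weight_mul_eq_one_sixth_iff (hbc : ∑ i, b i * c i ^ 2 = 1 / 3) :
    ∑ i, ∑ j, b i * A i j * c j = 1 / 6 ↔ ∑ i, b i * stageDefect A c i = 0 := by
  have third_div_two : (1 / 3 / 2 : K) = 1 / 6 := by rw [div_div]; norm_num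
  rw [sum_sum_weight_mul_eq, hbc, third_div_two, add_eq_right]

end StageDefect

section ThreeStages

variable {K : Type*} [Field K] {c₁ c₂ : K}

theorem interpolatoryWeight_unitInterval_of_node_one (h6 : (6 : K) ≠ 0) (x y : K) :
    interpolatoryWeight 1 (1 / 2) (1 / 3) x y 1 = (3 * y - 1) / (6 * (x - y) * (x - 1)) := by
  have numerator : 1 / 3 - (y + 1) * (1 / 2) + y * 1 * 1 = (3 * y - 1) / 6 := by grind
  rw [interpolatoryWeight, numerator, div_div, mul_assoc]

theorem interpolatoryWeight_unitInterval_at_one (h6 : (6 : K) ≠ 0) (x y : K) :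
    interpolatoryWeight 1 (1 / 2) (1 / 3) 1 x y =
      (6 * x * y - 3 * x - 3 * y + 2) / (6 * (y - 1) * (x - 1)) := by
  have numerator : 1 / 3 - (x + y) * (1 / 2) + x * y * 1 =
      (6 * x * y - 3 * x - 3 * y + 2) / 6 := by grind
  rw [interpolatoryWeight, numerator, div_div]
  ring

theorem second_stage_defect_eq (h2 : (2 : K) ≠ 0) (h₁ : c₁ - 1 ≠ 0) (h₂ : 3 * c₁ - 1 ≠ 0) {γ₂ : K}
    (hγ₂ : γ₂ = (6 * c₁ ^ 2 * c₂ - 4 * c₁ * c₂ - c₁ + c₂) / (2 * (3 * c₁ - 1) * (c₁ - 1))) :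
    (c₂ - γ₂) * c₁ + γ₂ * c₂ - c₂ ^ 2 / 2 =
      c₁ ^ 2 * (3 * c₂ - 1) * (c₂ - 1) / (2 * (3 * c₁ - 1) * (c₁ - 1)) := by
  have denominator_ne_zero : 2 * (3 * c₁ - 1) * (c₁ - 1) ≠ 0 :=
    mul_ne_zero (mul_ne_zero h2 h₂) h₁
  have half_mul_two : c₂ ^ 2 / 2 * 2 = c₂ ^ 2 := div_mul_cancel₀ _ h2
  rw [eq_div_iff denominator_ne_zero] at hγ₂ ⊢
  linear_combination (c₂ - c₁) * hγ₂ - (3 * c₁ - 1) * (c₁ - 1) * half_mul_two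

theorem weighted_defects_first_two_stages_eq_zero (h6 : (6 : K) ≠ 0)
    (h₁ : c₁ ≠ 1) (h₂ : c₁ ≠ 1 / 3) (h₃ : c₂ ≠ 1) (h₄ : c₂ ≠ c₁) {γ₂ : K}
    (hγ₂ : γ₂ = (6 * c₁ ^ 2 * c₂ - 4 * c₁ * c₂ - c₁ + c₂) / (2 * (3 * c₁ - 1) * (c₁ - 1))) :
    interpolatoryWeight 1 (1 / 2) (1 / 3) c₁ c₂ 1 * (c₁ * c₁ - c₁ ^ 2 / 2) +
      interpolatoryWeight 1 (1 / 2) (1 / 3) c₂ c₁ 1 *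
        ((c₂ - γ₂) * c₁ + γ₂ * c₂ - c₂ ^ 2 / 2) = 0 := by
  have two_ne_zero : (2 : K) ≠ 0 := fun h ↦ h6 (by linear_combination 3 * h)
  have three_ne_zero : (3 : K) ≠ 0 := fun h ↦ h6 (by linear_combination 2 * h)
  have c₁_sub_one : c₁ - 1 ≠ 0 := sub_ne_zero.mpr h₁
  have c₂_sub_one : c₂ - 1 ≠ 0 := sub_ne_zero.mpr h₃
  have c₂_sub_c₁ : c₂ - c₁ ≠ 0 := sub_ne_zero.mpr h₄
  have three_mul_c₁_sub_one : 3 * c₁ - 1 ≠ 0 := fun h ↦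
    h₂ (eq_div_of_mul_eq three_ne_zero (by linear_combination h))
  rw [interpolatoryWeight_unitInterval_of_node_one h6,
    interpolatoryWeight_unitInterval_of_node_one h6,
    second_stage_defect_eq two_ne_zero c₁_sub_one three_mul_c₁_sub_one hγ₂, ← neg_sub c₂ c₁]
  field_simp
  ring

end ThreeStages

theorem stmt_12_general {K : Type*} [Field K] (h6 : (6 : K) ≠ 0)
    (c₁ c₂ : K) (h₁ : c₁ ≠ 1) (h₂ : c₁ ≠ 1 / 3) (h₃ : c₂ ≠ 1) (h₄ : c₂ ≠ c₁)
    (b₁ b₂ b₃ γ₂ : K)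
    (hb₂ : b₂ = (3 * c₁ - 1) / (6 * (c₂ - c₁) * (c₂ - 1)))
    (hb₃ : b₃ = (6 * c₁ * c₂ - 3 * c₁ - 3 * c₂ + 2) / (6 * (c₂ - 1) * (c₁ - 1)))
    (hb₁ : b₁ = 1 - b₂ - b₃)
    (hγ₂ : γ₂ = (6 * c₁ ^ 2 * c₂ - 4 * c₁ * c₂ - c₁ + c₂) / (2 * (3 * c₁ - 1) * (c₁ - 1)))
    (c : Fin 3 → K) (hc : c = ![c₁, c₂, 1])
    (b : Fin 3 → K) (hb : b = ![b₁, b₂, b₃])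
    (A : Fin 3 → Fin 3 → K)
    (hA : A = ![![c₁, 0, 0], ![c₂ - γ₂, γ₂, 0], ![b₁, b₂, b₃]]) :
    (∑ i : Fin 3, b i = 1) ∧
    (∑ i : Fin 3, b i * c i = 1 / 2) ∧
    (∑ i : Fin 3, b i * c i ^ 2 = 1 / 3) ∧
    (∑ i : Fin 3, ∑ j : Fin 3, b i * A i j * c j = 1 / 6) := by
  have hw₂ : b₂ = interpolatoryWeight 1 (1 / 2) (1 / 3) c₂ c₁ 1 := by
    rw [hb₂, ← interpolatoryWeight_unitInterval_of_node_one h6]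
  have hw₃ : b₃ = interpolatoryWeight 1 (1 / 2) (1 / 3) 1 c₁ c₂ := by
    rw [hb₃, ← interpolatoryWeight_unitInterval_at_one h6]
  have hw₁ : b₁ = interpolatoryWeight 1 (1 / 2) (1 / 3) c₁ c₂ 1 := by
    linear_combination hb₁ - hw₂ - hw₃ -
      sum_interpolatoryWeight (1 : K) (1 / 2) (1 / 3) h₄.symm h₁ h₃
  have sum_weights : ∑ i, b i = 1 := by
    simpa [hb, Fin.sum_univ_three, hw₁, hw₂, hw₃] using
      sum_interpolatoryWeight (1 : K) (1 / 2) (1 / 3) h₄.symm h₁ h₃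
  have sum_weights_mul : ∑ i, b i * c i = 1 / 2 := by
    simpa [hb, hc, Fin.sum_univ_three, hw₁, hw₂, hw₃] using
      sum_interpolatoryWeight_mul (1 : K) (1 / 2) (1 / 3) h₄.symm h₁ h₃
  have sum_weights_mul_sq : ∑ i, b i * c i ^ 2 = 1 / 3 := by
    simpa [hb, hc, Fin.sum_univ_three, hw₁, hw₂, hw₃] using
      sum_interpolatoryWeight_mul_sq (1 : K) (1 / 2) (1 / 3) h₄.symm h₁ h₃
  refine ⟨sum_weights, sum_weights_mul, sum_weights_mul_sq,
    (sum_sum_weight_mul_eq_one_sixth_iff sum_weights_mul_sq).mpr ?_⟩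
  have last_defect : stageDefect A c 2 = 0 :=
    stageDefect_eq_zero_of_row_eq_weights (by simp [hA, hb]) (by simp [hc]) sum_weights_mul
  rw [Fin.sum_univ_three, last_defect, mul_zero, add_zero]
  simpa [stageDefect, hA, hb, hc, Fin.sum_univ_three, hw₁, hw₂] using
    weighted_defects_first_two_stages_eq_zero h6 h₁ h₂ h₃ h₄ hγ₂

theorem stmt_12 (c₁ c₂ : ℝ) (h₁ : c₁ ≠ 1) (h₂ : c₁ ≠ 1 / 3) (h₃ : c₂ ≠ 1) (h₄ : c₂ ≠ c₁)
    (b₁ b₂ b₃ γ₂ : ℝ)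
    (hb₂ : b₂ = (3 * c₁ - 1) / (6 * (c₂ - c₁) * (c₂ - 1)))
    (hb₃ : b₃ = (6 * c₁ * c₂ - 3 * c₁ - 3 * c₂ + 2) / (6 * (c₂ - 1) * (c₁ - 1)))
    (hb₁ : b₁ = 1 - b₂ - b₃)
    (hγ₂ : γ₂ = (6 * c₁ ^ 2 * c₂ - 4 * c₁ * c₂ - c₁ + c₂) / (2 * (3 * c₁ - 1) * (c₁ - 1)))
    (c : Fin 3 → ℝ) (hc : c = ![c₁, c₂, 1])
    (b : Fin 3 → ℝ) (hb : b = ![b₁, b₂, b₃])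
    (A : Fin 3 → Fin 3 → ℝ)
    (hA : A = ![![c₁, 0, 0], ![c₂ - γ₂, γ₂, 0], ![b₁, b₂, b₃]]) :
    (∑ i : Fin 3, b i = 1) ∧
    (∑ i : Fin 3, b i * c i = 1 / 2) ∧
    (∑ i : Fin 3, b i * c i ^ 2 = 1 / 3) ∧
    (∑ i : Fin 3, ∑ j : Fin 3, b i * A i j * c j = 1 / 6) :=
  stmt_12_general (by norm_num) c₁ c₂ h₁ h₂ h₃ h₄ b₁ b₂ b₃ γ₂ hb₂ hb₃ hb₁ hγ₂
    c hc b hb A hA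
end

section
/- Let Δx > 0 and k ∈ ℝ with |k·Δx| < 2π. Define sinc(t) = sin(t)/t for t ≠ 0 and sinc(0) = 1, and define û : ℝ → ℂ by û(x) = exp(i·k·x)/sinc(k·Δx/2). Then for every x ∈ ℝ: (û(x + Δx/2) − û(x − Δx/2))/Δx = i·k·exp(i·k·x). -/
open Complex

/-- The unnormalized sinc function: `sinc t = sin t / t` for `t ≠ 0`, `sinc 0 = 1`. -/
noncomputable def sinc (t : ℝ) : ℝ := if t = 0 then 1 else Real.sin t / t

theorem mul_sinc (t : ℝ) : t * sinc t = Real.sin t := by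
  by_cases ht : t = 0
  · simp [ht]
  · rw [sinc, if_neg ht, mul_div_cancel₀ _ ht]

theorem sinc_ne_zero_of_abs_lt_pi {t : ℝ} (ht : |t| < Real.pi) : sinc t ≠ 0 := by
  intro hsinc
  obtain ⟨neg_pi_lt, lt_pi⟩ := abs_lt.mp ht
  have sin_eq_zero : Real.sin t = 0 := by rw [← mul_sinc, hsinc, mul_zero]
  have t_eq_zero : t = 0 := (Real.sin_eq_zero_iff_of_lt_of_lt neg_pi_lt lt_pi).mp sin_eq_zero
  simp [sinc, t_eq_zero] at hsinc

theorem exp_I_mul_add_sub_exp_I_mul_sub (z w : ℂ) :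
    exp (I * (z + w)) - exp (I * (z - w)) = 2 * I * sin w * exp (I * z) := by
  have exp_sub_exp_neg : exp (w * I) - exp (-w * I) = 2 * I * sin w := by
    rw [exp_mul_I, exp_mul_I, cos_neg, sin_neg]
    ring
  calc exp (I * (z + w)) - exp (I * (z - w))
      = (exp (w * I) - exp (-w * I)) * exp (I * z) := by
        rw [sub_mul, ← exp_add, ← exp_add]
        ring_nf
    _ = 2 * I * sin w * exp (I * z) := by rw [exp_sub_exp_neg]

theorem central_difference_exp_I_mul (k x h : ℝ) :
    exp (I * (k * (x + h / 2) : ℝ)) - exp (I * (k * (x - h / 2) : ℝ))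
      = h * (I * k * exp (I * (k * x : ℝ))) * sinc (k * h / 2) := by
  have sin_eq : sin ((k * h / 2 : ℝ) : ℂ) = k * h / 2 * sinc (k * h / 2) := by
    rw [← ofReal_sin, ← mul_sinc]
    push_cast
    rfl
  calc exp (I * (k * (x + h / 2) : ℝ)) - exp (I * (k * (x - h / 2) : ℝ))
      = exp (I * ((k * x : ℝ) + (k * h / 2 : ℝ)))
          - exp (I * ((k * x : ℝ) - (k * h / 2 : ℝ))) := by
        push_cast
        ring_nf
    _ = 2 * I * (k * h / 2 * sinc (k * h / 2)) * exp (I * (k * x : ℝ)) := by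
        rw [exp_I_mul_add_sub_exp_I_mul_sub, sin_eq]
    _ = h * (I * k * exp (I * (k * x : ℝ))) * sinc (k * h / 2) := by ring

theorem stmt_15_general (Δx k : ℝ) (hΔx : Δx ≠ 0) (hsinc : sinc (k * Δx / 2) ≠ 0)
    (uhat : ℝ → ℂ)
    (huhat : ∀ x : ℝ, uhat x = exp (I * (k * x : ℝ)) / sinc (k * Δx / 2)) (x : ℝ) :
    (uhat (x + Δx / 2) - uhat (x - Δx / 2)) / Δx = I * k * exp (I * (k * x : ℝ)) := by
  rw [huhat, huhat, ← sub_div, central_difference_exp_I_mul,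
    mul_div_cancel_right₀ _ (ofReal_ne_zero.mpr hsinc),
    mul_div_cancel_left₀ _ (ofReal_ne_zero.mpr hΔx)]

theorem stmt_15 (Δx k : ℝ) (hΔx : 0 < Δx) (hk : |k * Δx| < 2 * Real.pi)
    (uhat : ℝ → ℂ)
    (huhat : ∀ x : ℝ,
      uhat x = Complex.exp (Complex.I * ((k * x : ℝ) : ℂ)) / ((sinc (k * Δx / 2) : ℝ) : ℂ)) :
    ∀ x : ℝ,
      (uhat (x + Δx / 2) - uhat (x - Δx / 2)) / ((Δx : ℝ) : ℂ)
        = Complex.I * ((k : ℝ) : ℂ) * Complex.exp (Complex.I * ((k * x : ℝ) : ℂ)) := by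
  have half_lt_pi : |k * Δx / 2| < Real.pi := by
    rw [abs_div, abs_two]
    linarith
  exact stmt_15_general Δx k hΔx.ne' (sinc_ne_zero_of_abs_lt_pi half_lt_pi) uhat huhat
end

section
/- Let γ ∈ ℝ with 1 − √2/2 < γ < 1/3. Define γ_2 = (6γ² − 6γ + 1)/(3·(2γ² − 4γ + 1)), q_1 = 2γ + γ_2, and q_2 = 2γ·γ_2 + γ². Then 8·q_1 − 12·q_2 − 3 ≥ 0; equivalently, γ_2 ≥ (3 − 16γ + 12γ²)/(8 − 24γ). (Note that 2γ² − 4γ + 1 ≠ 0 and 8 − 24γ > 0 on this interval.) -/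
/-!
Substituting `γ₂` makes `8 q₁ - 12 q₂ - 3` a rational function of `γ` whose numerator is
a positive quartic (a sum of squares plus a positive constant) and whose denominator is
`-3 (2 γ ^ 2 - 4 γ + 1)`. So it is positive between the roots `1 ± √2 / 2` of
`2 γ ^ 2 - 4 γ + 1`, and the given interval lies between these roots.
-/

section StabilityMargin

variable {K : Type*} [Field K]

/-- The middle diagonal entry `γ₂` of the scheme with diagonal `(γ, γ₂, γ)`, as determined by the
third-order conditions. Meaningful only if `2 * γ ^ 2 - 4 * γ + 1 ≠ 0`; elsewhere division by zero
makes it `0`. -/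
def middleDiagonal (γ : K) : K :=
  (6 * γ ^ 2 - 6 * γ + 1) / (3 * (2 * γ ^ 2 - 4 * γ + 1))

/-- The quantity `8 q₁ - 12 q₂ - 3` whose nonnegativity is I-stability, where `q₁` and `q₂` are the
first two elementary symmetric functions of the diagonal `(γ, c, γ)`. -/
def stabilityMargin (γ c : K) : K :=
  8 * (2 * γ + c) - 12 * (2 * γ * c + γ ^ 2) - 3

theorem stabilityMargin_eq_mul_sub (γ c : K) :
    stabilityMargin γ c = c * (8 - 24 * γ) - (3 - 16 * γ + 12 * γ ^ 2) := by
  unfold stabilityMargin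
  ring

theorem stabilityMargin_middleDiagonal [CharZero K] {γ : K} (hγ : 2 * γ ^ 2 - 4 * γ + 1 ≠ 0) :
    stabilityMargin γ (middleDiagonal γ) =
      (72 * γ ^ 4 - 96 * γ ^ 3 + 54 * γ ^ 2 - 12 * γ + 1) / (3 * -(2 * γ ^ 2 - 4 * γ + 1)) := by
  have hden : 3 * (2 * γ ^ 2 - 4 * γ + 1) ≠ 0 := mul_ne_zero three_ne_zero hγ
  have hmid : middleDiagonal γ * (3 * (2 * γ ^ 2 - 4 * γ + 1)) = 6 * γ ^ 2 - 6 * γ + 1 :=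
    div_mul_cancel₀ _ hden
  rw [stabilityMargin_eq_mul_sub, mul_neg, eq_div_iff (neg_ne_zero.mpr hden)]
  linear_combination (-(8 - 24 * γ)) * hmid

variable [LinearOrder K] [IsStrictOrderedRing K]

theorem stabilityMargin_nonneg_iff {γ : K} (hγ : 0 < 8 - 24 * γ) (c : K) :
    0 ≤ stabilityMargin γ c ↔ (3 - 16 * γ + 12 * γ ^ 2) / (8 - 24 * γ) ≤ c := by
  rw [stabilityMargin_eq_mul_sub, sub_nonneg, div_le_iff₀ hγ]

theorem stabilityMargin_numerator_pos (γ : K) :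
    0 < 72 * γ ^ 4 - 96 * γ ^ 3 + 54 * γ ^ 2 - 12 * γ + 1 :=
  calc
    0 < (12 * γ ^ 2 - 8 * γ + 1) ^ 2 / 2 + 10 * (γ - 1 / 5) ^ 2 + 1 / 10 := by positivity
    _ = 72 * γ ^ 4 - 96 * γ ^ 3 + 54 * γ ^ 2 - 12 * γ + 1 := by ring

theorem stabilityMargin_middleDiagonal_pos {γ : K} (hγ : 2 * γ ^ 2 - 4 * γ + 1 < 0) :
    0 < stabilityMargin γ (middleDiagonal γ) := by
  rw [stabilityMargin_middleDiagonal hγ.ne]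
  exact div_pos (stabilityMargin_numerator_pos γ) (mul_pos three_pos (neg_pos.mpr hγ))

end StabilityMargin

theorem two_mul_sq_sub_four_mul_add_one_neg_iff (γ : ℝ) :
    2 * γ ^ 2 - 4 * γ + 1 < 0 ↔ |γ - 1| < √2 / 2 := by
  have complete_square : 2 * γ ^ 2 - 4 * γ + 1 = 2 * ((γ - 1) ^ 2 - (√2 / 2) ^ 2) := by
    rw [div_pow, Real.sq_sqrt zero_le_two]
    ring
  rw [complete_square, mul_sub, sub_neg, mul_lt_mul_iff_right₀ two_pos, sq_lt_sq,
    abs_of_nonneg (by positivity : 0 ≤ √2 / 2)]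

theorem stmt_17 (γ : ℝ) (h₁ : 1 - Real.sqrt 2 / 2 < γ) (h₂ : γ < 1 / 3)
    (γ₂ q₁ q₂ : ℝ)
    (hγ₂ : γ₂ = (6 * γ ^ 2 - 6 * γ + 1) / (3 * (2 * γ ^ 2 - 4 * γ + 1)))
    (hq₁ : q₁ = 2 * γ + γ₂) (hq₂ : q₂ = 2 * γ * γ₂ + γ ^ 2) :
    (0 ≤ 8 * q₁ - 12 * q₂ - 3) ∧
    ((3 - 16 * γ + 12 * γ ^ 2) / (8 - 24 * γ) ≤ γ₂) ∧
    (2 * γ ^ 2 - 4 * γ + 1 ≠ 0) ∧ (0 < 8 - 24 * γ) := by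
  have hbetween : |γ - 1| < √2 / 2 :=
    abs_lt.mpr ⟨by linarith, by linarith [Real.sqrt_nonneg 2]⟩
  have hden : 2 * γ ^ 2 - 4 * γ + 1 < 0 :=
    (two_mul_sq_sub_four_mul_add_one_neg_iff γ).mpr hbetween
  have hcoeff : 0 < 8 - 24 * γ := by linarith
  have hmargin : 0 ≤ stabilityMargin γ γ₂ := by
    rw [hγ₂]
    exact (stabilityMargin_middleDiagonal_pos hden).le
  refine ⟨?_, (stabilityMargin_nonneg_iff hcoeff γ₂).mp hmargin, hden.ne, hcoeff⟩
  rw [hq₁, hq₂]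
  exact hmargin
end

section
/- Let γ ∈ ℝ with 2γ² − 4γ + 1 ≠ 0 and 3γ³ − 9γ² + 6γ − 1 ≠ 0. Define b_2 = −(3/4)·(2γ² − 4γ + 1)²/(3γ³ − 9γ² + 6γ − 1), c_2 = (6γ² − 9γ + 2)/(3·(2γ² − 4γ + 1)), γ_2 = (6γ² − 6γ + 1)/(3·(2γ² − 4γ + 1)), b_1 = 1 − b_2 − γ, and consider the 3-stage Butcher tableau with abscissae c = (γ, c_2, 1), weights b = (b_1, b_2, γ), and matrix A with rows (γ, 0, 0), (c_2 − γ_2, γ_2, 0), (b_1, b_2, γ). Then the third-order conditions hold: Σ_{i=1}^3 b_i = 1, Σ_{i=1}^3 b_i·c_i = 1/2, Σ_{i=1}^3 b_i·c_i² = 1/3, and Σ_{i,j=1}^3 b_i·a_{ij}·c_j = 1/6. -/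
open Finset

/-!
Once `b₁ = 1 - b₂ - γ`, the weight `b₂` enters the remaining order conditions only through
`b₂ * (c₂ - γ)`. The condition on `∑ bᵢ cᵢ` fixes this product to be `p / 2` with
`p = 2 * γ ^ 2 - 4 * γ + 1`; substituting it makes the other two conditions linear in `c₂` and in
`γ₂`, each with leading coefficient proportional to `p`. The resulting `c₂` satisfies
`c₂ - γ = -2 * q / (3 * p)` with `q = 3 * γ ^ 3 - 9 * γ ^ 2 + 6 * γ - 1`, and dividing by this
determines `b₂`.
-/

/-- The Butcher tableau of a Runge–Kutta scheme with stages indexed by `ι`: the matrix `A`, the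
weights `b` and the abscissae `c`. The abscissae are not required to be the row sums of `A`. -/
structure ButcherTableau (ι K : Type*) where
  A : ι → ι → K
  b : ι → K
  c : ι → K

namespace ButcherTableau

variable {K : Type*} [Field K]

/-- The order conditions up to order three of a Runge–Kutta scheme. They have their usual meaning
where `2` and `3` are nonzero; elsewhere some of the right-hand sides are `1 / 0 = 0`. -/
def IsThirdOrder {ι : Type*} [Fintype ι] (T : ButcherTableau ι K) : Prop :=
  (∑ i, T.b i = 1) ∧
  (∑ i, T.b i * T.c i = 1 / 2) ∧
  (∑ i, T.b i * T.c i ^ 2 = 1 / 3) ∧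
  (∑ i, ∑ j, T.b i * T.A i j * T.c j = 1 / 6)

/-- The three-stage stiffly accurate DIRK tableau with diagonal `(γ, γ₂, γ)` and `b₃ = c₁ = γ`. -/
def stifflyAccurateDirk (γ b₁ b₂ c₂ γ₂ : K) : ButcherTableau (Fin 3) K where
  A := ![![γ, 0, 0], ![c₂ - γ₂, γ₂, 0], ![b₁, b₂, γ]]
  b := ![b₁, b₂, γ]
  c := ![γ, c₂, 1]

variable {γ b₁ b₂ c₂ γ₂ : K}

theorem isThirdOrder_stifflyAccurateDirk_iff :
    (stifflyAccurateDirk γ b₁ b₂ c₂ γ₂).IsThirdOrder ↔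
      b₁ + b₂ + γ = 1 ∧
      b₁ * γ + b₂ * c₂ + γ = 1 / 2 ∧
      b₁ * γ ^ 2 + b₂ * c₂ ^ 2 + γ = 1 / 3 ∧
      b₁ * γ ^ 2 + b₂ * ((c₂ - γ₂) * γ + γ₂ * c₂) + γ * (b₁ * γ + b₂ * c₂ + γ) = 1 / 6 := by
  simp only [IsThirdOrder, stifflyAccurateDirk, Fin.sum_univ_three, Matrix.cons_val]
  ring_nf

theorem node_sub_eq_div [NeZero (3 : K)] (hp : 2 * γ ^ 2 - 4 * γ + 1 ≠ 0)
    (hc₂ : c₂ = (6 * γ ^ 2 - 9 * γ + 2) / (3 * (2 * γ ^ 2 - 4 * γ + 1))) :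
    c₂ - γ = -2 * (3 * γ ^ 3 - 9 * γ ^ 2 + 6 * γ - 1) / (3 * (2 * γ ^ 2 - 4 * γ + 1)) := by
  have three_ne : (3 : K) ≠ 0 := NeZero.ne 3
  rw [hc₂, div_sub' (mul_ne_zero three_ne hp)]
  ring

variable [NeZero (2 : K)]

theorem sum_weights_mul_nodes_eq_half_iff (hb₁ : b₁ = 1 - b₂ - γ) :
    b₁ * γ + b₂ * c₂ + γ = 1 / 2 ↔ b₂ * (c₂ - γ) = (2 * γ ^ 2 - 4 * γ + 1) / 2 := by
  have two_ne : (2 : K) ≠ 0 := NeZero.ne 2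
  subst hb₁
  field_simp
  constructor <;> intro h <;> linear_combination h

variable [NeZero (3 : K)]

theorem sum_weights_mul_sq_nodes_eq_third_iff (hb₁ : b₁ = 1 - b₂ - γ)
    (hprod : b₂ * (c₂ - γ) = (2 * γ ^ 2 - 4 * γ + 1) / 2) :
    b₁ * γ ^ 2 + b₂ * c₂ ^ 2 + γ = 1 / 3 ↔
      c₂ * (3 * (2 * γ ^ 2 - 4 * γ + 1)) = 6 * γ ^ 2 - 9 * γ + 2 := by
  have two_ne : (2 : K) ≠ 0 := NeZero.ne 2
  have three_ne : (3 : K) ≠ 0 := NeZero.ne 3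
  have sum_eq : b₁ * γ ^ 2 + b₂ * c₂ ^ 2 + γ =
      (1 - γ) * γ ^ 2 + (2 * γ ^ 2 - 4 * γ + 1) / 2 * (c₂ + γ) + γ := by
    linear_combination γ ^ 2 * hb₁ + (c₂ + γ) * hprod
  rw [sum_eq]
  field_simp
  constructor <;> intro h <;> linear_combination h

theorem sum_weights_mul_matrix_mul_nodes_eq_sixth_iff (hb₁ : b₁ = 1 - b₂ - γ)
    (hprod : b₂ * (c₂ - γ) = (2 * γ ^ 2 - 4 * γ + 1) / 2) :
    b₁ * γ ^ 2 + b₂ * ((c₂ - γ₂) * γ + γ₂ * c₂) + γ * (b₁ * γ + b₂ * c₂ + γ) = 1 / 6 ↔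
      γ₂ * (3 * (2 * γ ^ 2 - 4 * γ + 1)) = 6 * γ ^ 2 - 6 * γ + 1 := by
  have two_ne : (2 : K) ≠ 0 := NeZero.ne 2
  have three_ne : (3 : K) ≠ 0 := NeZero.ne 3
  have sum_eq : b₁ * γ ^ 2 + b₂ * ((c₂ - γ₂) * γ + γ₂ * c₂) + γ * (b₁ * γ + b₂ * c₂ + γ) =
      2 * (1 - γ) * γ ^ 2 + (2 * γ ^ 2 - 4 * γ + 1) / 2 * (γ₂ + 2 * γ) + γ ^ 2 := by
    linear_combination 2 * γ ^ 2 * hb₁ + (γ₂ + 2 * γ) * hprod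
  have six_eq : (6 : K) = 2 * 3 := by norm_num
  rw [sum_eq, six_eq]
  field_simp
  constructor <;> intro h <;> linear_combination h

theorem isThirdOrder_stifflyAccurateDirk_iff_linear :
    (stifflyAccurateDirk γ b₁ b₂ c₂ γ₂).IsThirdOrder ↔
      b₁ = 1 - b₂ - γ ∧
      b₂ * (c₂ - γ) = (2 * γ ^ 2 - 4 * γ + 1) / 2 ∧
      c₂ * (3 * (2 * γ ^ 2 - 4 * γ + 1)) = 6 * γ ^ 2 - 9 * γ + 2 ∧
      γ₂ * (3 * (2 * γ ^ 2 - 4 * γ + 1)) = 6 * γ ^ 2 - 6 * γ + 1 := by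
  have sum_weights_iff : b₁ + b₂ + γ = 1 ↔ b₁ = 1 - b₂ - γ := by
    rw [eq_sub_iff_add_eq, eq_sub_iff_add_eq, add_right_comm]
  rw [isThirdOrder_stifflyAccurateDirk_iff, sum_weights_iff]
  refine and_congr_right fun hb₁ ↦ ?_
  rw [sum_weights_mul_nodes_eq_half_iff hb₁]
  exact and_congr_right fun hprod ↦ and_congr
    (sum_weights_mul_sq_nodes_eq_third_iff hb₁ hprod)
    (sum_weights_mul_matrix_mul_nodes_eq_sixth_iff hb₁ hprod)

theorem weight_mul_node_sub_iff (hp : 2 * γ ^ 2 - 4 * γ + 1 ≠ 0)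
    (hq : 3 * γ ^ 3 - 9 * γ ^ 2 + 6 * γ - 1 ≠ 0)
    (hc₂ : c₂ = (6 * γ ^ 2 - 9 * γ + 2) / (3 * (2 * γ ^ 2 - 4 * γ + 1))) :
    b₂ * (c₂ - γ) = (2 * γ ^ 2 - 4 * γ + 1) / 2 ↔
      b₂ = -(3 / 4) * (2 * γ ^ 2 - 4 * γ + 1) ^ 2 / (3 * γ ^ 3 - 9 * γ ^ 2 + 6 * γ - 1) := by
  have two_ne : (2 : K) ≠ 0 := NeZero.ne 2
  have three_ne : (3 : K) ≠ 0 := NeZero.ne 3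
  have four_eq : (4 : K) = 2 * 2 := by norm_num
  have node_sub_eq := node_sub_eq_div hp hc₂
  have node_sub_ne : c₂ - γ ≠ 0 := by
    rw [node_sub_eq]
    exact div_ne_zero (mul_ne_zero (neg_ne_zero.2 two_ne) hq) (mul_ne_zero three_ne hp)
  rw [← eq_div_iff node_sub_ne, node_sub_eq]
  generalize 2 * γ ^ 2 - 4 * γ + 1 = p at *
  generalize 3 * γ ^ 3 - 9 * γ ^ 2 + 6 * γ - 1 = q at *
  rw [four_eq]
  field_simp

end ButcherTableau

open ButcherTableau

theorem stmt_18_general {K : Type*} [Field K] [NeZero (2 : K)] [NeZero (3 : K)]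
    {γ b₁ b₂ c₂ γ₂ : K} (hp : 2 * γ ^ 2 - 4 * γ + 1 ≠ 0)
    (hq : 3 * γ ^ 3 - 9 * γ ^ 2 + 6 * γ - 1 ≠ 0) :
    (stifflyAccurateDirk γ b₁ b₂ c₂ γ₂).IsThirdOrder ↔
      b₁ = 1 - b₂ - γ ∧
      b₂ = -(3 / 4) * (2 * γ ^ 2 - 4 * γ + 1) ^ 2 / (3 * γ ^ 3 - 9 * γ ^ 2 + 6 * γ - 1) ∧
      c₂ = (6 * γ ^ 2 - 9 * γ + 2) / (3 * (2 * γ ^ 2 - 4 * γ + 1)) ∧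
      γ₂ = (6 * γ ^ 2 - 6 * γ + 1) / (3 * (2 * γ ^ 2 - 4 * γ + 1)) := by
  have leading_ne : 3 * (2 * γ ^ 2 - 4 * γ + 1) ≠ 0 := mul_ne_zero (NeZero.ne 3) hp
  rw [isThirdOrder_stifflyAccurateDirk_iff_linear, ← eq_div_iff leading_ne,
    ← eq_div_iff leading_ne]
  exact and_congr_right fun _ ↦ and_congr_left fun ⟨hc₂, _⟩ ↦ weight_mul_node_sub_iff hp hq hc₂

theorem stmt_18 (γ : ℝ) (h₁ : 2 * γ ^ 2 - 4 * γ + 1 ≠ 0)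
    (h₂ : 3 * γ ^ 3 - 9 * γ ^ 2 + 6 * γ - 1 ≠ 0)
    (b₁ b₂ c₂ γ₂ : ℝ)
    (hb₂ : b₂ = -(3 / 4) * (2 * γ ^ 2 - 4 * γ + 1) ^ 2 / (3 * γ ^ 3 - 9 * γ ^ 2 + 6 * γ - 1))
    (hc₂ : c₂ = (6 * γ ^ 2 - 9 * γ + 2) / (3 * (2 * γ ^ 2 - 4 * γ + 1)))
    (hγ₂ : γ₂ = (6 * γ ^ 2 - 6 * γ + 1) / (3 * (2 * γ ^ 2 - 4 * γ + 1)))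
    (hb₁ : b₁ = 1 - b₂ - γ)
    (c : Fin 3 → ℝ) (hc : c = ![γ, c₂, 1])
    (b : Fin 3 → ℝ) (hb : b = ![b₁, b₂, γ])
    (A : Fin 3 → Fin 3 → ℝ)
    (hA : A = ![![γ, 0, 0], ![c₂ - γ₂, γ₂, 0], ![b₁, b₂, γ]]) :
    (∑ i : Fin 3, b i = 1) ∧
    (∑ i : Fin 3, b i * c i = 1 / 2) ∧
    (∑ i : Fin 3, b i * c i ^ 2 = 1 / 3) ∧
    (∑ i : Fin 3, ∑ j : Fin 3, b i * A i j * c j = 1 / 6) := by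
  subst hc hb hA
  exact (stmt_18_general h₁ h₂).2 ⟨hb₁, hb₂, hc₂, hγ₂⟩
end
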